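/- Let H be a real-analytic hypersurface in an open set U ⊆ ℂⁿ (n ≥ 2) that is curve-supported from two sides at a point p ∈ H. Then there exists an open neighborhood Ω of p in ℂⁿ such that for every open set W ⊆ ℂⁿ with H ⊆ W and every holomorphic function f : W → ℂ, there exists a holomorphic function F : Ω → ℂ with F(z) = f(z) for all z ∈ Ω ∩ H. -/

import Mathlib

open Metric

noncomputable section

/-- `H` is a (singular) real-analytic hypersurface in the open set `U ⊆ ℂⁿ`:
`H = {z ∈ U : ρ z = 0}` for some real-analytic `ρ : U → ℝ` (analytic over `ℝ`),
`H` nonempty, and `ρ` does not vanish identically on any connected component of `U`. -/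
def IsRealAnalyticHypersurface {n : ℕ} (U H : Set (EuclideanSpace ℂ (Fin n))) : Prop :=
  IsOpen U ∧ H.Nonempty ∧
    ∃ ρ : EuclideanSpace ℂ (Fin n) → ℝ,
      AnalyticOnNhd ℝ ρ U ∧
      H = {z | z ∈ U ∧ ρ z = 0} ∧
      ∀ z ∈ U, ∃ w ∈ connectedComponentIn U z, ρ w ≠ 0

/-- `C = φ '' 𝔻` is a support curve for `H` at `p`, parametrized by the nonconstant
holomorphic map `φ : 𝔻 → U` with `φ 0 = p` and `C ∩ H = {p}`. -/
def IsSupportCurveVia {n : ℕ} (U H : Set (EuclideanSpace ℂ (Fin n)))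
    (p : EuclideanSpace ℂ (Fin n)) (φ : ℂ → EuclideanSpace ℂ (Fin n))
    (C : Set (EuclideanSpace ℂ (Fin n))) : Prop :=
  DifferentiableOn ℂ φ (ball 0 1) ∧
  Set.MapsTo φ (ball 0 1) U ∧
  (∃ a ∈ ball (0 : ℂ) 1, ∃ b ∈ ball (0 : ℂ) 1, φ a ≠ φ b) ∧
  φ 0 = p ∧
  C = φ '' ball 0 1 ∧
  C ∩ H = {p}

/-- `C` is a support curve for `H` at `p`. -/
def IsSupportCurve {n : ℕ} (U H : Set (EuclideanSpace ℂ (Fin n)))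
    (p : EuclideanSpace ℂ (Fin n)) (C : Set (EuclideanSpace ℂ (Fin n))) : Prop :=
  ∃ φ : ℂ → EuclideanSpace ℂ (Fin n), IsSupportCurveVia U H p φ C

/-- `V` is a connected component of `U \ H`. -/
def IsComponentOfComplement {n : ℕ} (U H V : Set (EuclideanSpace ℂ (Fin n))) : Prop :=
  ∃ x ∈ U \ H, V = connectedComponentIn (U \ H) x

/-- `H` is curve-supported from two sides at `p`: there are two support curves at `p`
lying (off `p`) in two distinct connected components of `U \ H`. -/
def CurveSupportedFromTwoSides {n : ℕ} (U H : Set (EuclideanSpace ℂ (Fin n)))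
    (p : EuclideanSpace ℂ (Fin n)) : Prop :=
  ∃ C₁ C₂ V₁ V₂ : Set (EuclideanSpace ℂ (Fin n)),
    IsSupportCurve U H p C₁ ∧ IsSupportCurve U H p C₂ ∧
    IsComponentOfComplement U H V₁ ∧ IsComponentOfComplement U H V₂ ∧
    V₁ ≠ V₂ ∧ C₁ \ {p} ⊆ V₁ ∧ C₂ \ {p} ⊆ V₂

/-- `ψ` is an analytic disc attached to `S`: a nonconstant continuous map on the closed
unit disc, holomorphic on the open unit disc, with boundary values in `S`. -/
def IsAttachedDisc {n : ℕ} (S : Set (EuclideanSpace ℂ (Fin n)))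
    (ψ : ℂ → EuclideanSpace ℂ (Fin n)) : Prop :=
  ContinuousOn ψ (closedBall 0 1) ∧
  DifferentiableOn ℂ ψ (ball 0 1) ∧
  (∃ a ∈ closedBall (0 : ℂ) 1, ∃ b ∈ closedBall (0 : ℂ) 1, ψ a ≠ ψ b) ∧
  ψ '' sphere 0 1 ⊆ S

/-- The polynomial hull of `K ⊆ ℂⁿ`. -/
def polyHull {n : ℕ} (K : Set (EuclideanSpace ℂ (Fin n))) : Set (EuclideanSpace ℂ (Fin n)) :=
  {z | ∀ P : MvPolynomial (Fin n) ℂ,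
    ‖MvPolynomial.eval (fun i => z i) P‖ ≤
      ⨆ w : K, ‖MvPolynomial.eval (fun i => (w : EuclideanSpace ℂ (Fin n)) i) P‖}

/-- The rational hull of `K ⊆ ℂⁿ`. -/
def ratHull {n : ℕ} (K : Set (EuclideanSpace ℂ (Fin n))) : Set (EuclideanSpace ℂ (Fin n)) :=
  {z | ∀ P : MvPolynomial (Fin n) ℂ,
    MvPolynomial.eval (fun i => z i) P ∈
      (fun w : EuclideanSpace ℂ (Fin n) => MvPolynomial.eval (fun i => w i) P) '' K}

section
open Polynomial Filter Topology

namespace HX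

theorem exists_prem {R : Type*} [CommRing R] (p q : R[X]) (hq : 0 < q.natDegree) :
    ∃ r : R[X], r.natDegree < q.natDegree ∧ ∃ (s : R[X]) (k : ℕ),
      C (q.leadingCoeff ^ k) * p = q * s + r := by
  induction hn : p.natDegree using Nat.strong_induction_on generalizing p with
  | _ n ih =>
    by_cases h : p.natDegree < q.natDegree
    · exact ⟨p, h, 0, 0, by simp⟩
    push Not at h
    set p' := C q.leadingCoeff * p - C p.leadingCoeff * q * X ^ (p.natDegree - q.natDegree) with hp'
    have hlt : p'.natDegree < p.natDegree := by
      have hle : p'.natDegree ≤ p.natDegree := by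
        rw [hp']
        refine (natDegree_sub_le _ _).trans (max_le ?_ ?_)
        · exact natDegree_C_mul_le _ _
        · refine (natDegree_mul_le).trans ?_
          have := natDegree_C_mul_le p.leadingCoeff q
          have h3 := natDegree_X_pow_le (R := R) (p.natDegree - q.natDegree)
          omega
      have hc : p'.coeff p.natDegree = 0 := by
        rw [hp', coeff_sub, coeff_C_mul, mul_assoc, coeff_C_mul]
        have : p.natDegree = q.natDegree + (p.natDegree - q.natDegree) := by omega
        conv_lhs => enter [2, 2, 2]; rw [this]
        rw [coeff_mul_X_pow]
        simp only [coeff_natDegree]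
        ring
      rcases hle.lt_or_eq with h1 | h1
      · exact h1
      · exfalso
        have : p'.leadingCoeff = 0 := by rw [leadingCoeff, h1, hc]
        rw [leadingCoeff_eq_zero] at this
        rw [this] at h1
        simp at h1
        omega
    obtain ⟨r, hr, s, k, hs⟩ := ih _ (hn ▸ hlt) p' rfl
    refine ⟨r, hr, s + C (q.leadingCoeff ^ k * p.leadingCoeff) * X ^ (p.natDegree - q.natDegree),
      k + 1, ?_⟩
    rw [hp'] at hs
    simp only [map_mul, pow_succ, map_pow] at hs ⊢
    linear_combination hs

open Classical in
/-- A pseudo-remainder. -/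
noncomputable def prem {R : Type*} [CommRing R] (p q : R[X]) : R[X] :=
  if h : 0 < q.natDegree then (exists_prem p q h).choose else 0

theorem prem_spec {R : Type*} [CommRing R] (p q : R[X]) (hq : 0 < q.natDegree) :
    (prem p q).natDegree < q.natDegree ∧ ∃ (s : R[X]) (k : ℕ),
      C (q.leadingCoeff ^ k) * p = q * s + prem p q := by
  rw [prem, dif_pos hq]
  exact (exists_prem p q hq).choose_spec

def ClosedAbove {R : Type*} [CommRing R] (e : ℕ) (T : Finset R[X]) : Prop :=
  ∀ p ∈ T, e < p.natDegree → p.eraseLead ∈ T ∧ derivative p ∈ T ∧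
    ∀ q ∈ T, e < q.natDegree → q.natDegree ≤ p.natDegree → prem p q ∈ T

theorem natDegree_eraseLead_lt {R : Type*} [CommRing R] (p : R[X]) (h : 0 < p.natDegree) :
    p.eraseLead.natDegree < p.natDegree := by
  rcases eraseLead_natDegree_lt_or_eraseLead_eq_zero p with h1 | h1
  · exact h1
  · rw [h1]; simpa using h

open Classical in
theorem exists_closed {R : Type*} [CommRing R] (F : Finset R[X]) :
    ∃ T : Finset R[X], F ⊆ T ∧ ClosedAbove 0 T := by
  have key : ∀ e : ℕ, ∀ F : Finset R[X], ClosedAbove e F →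
      ∃ T : Finset R[X], F ⊆ T ∧ ClosedAbove 0 T := by
    intro e
    induction e with
    | zero => intro F hF; exact ⟨F, subset_rfl, hF⟩
    | succ e ih =>
      intro F hF
      set G := F.filter (fun p => p.natDegree = e + 1) with hG
      set F2 := F.filter (fun p => e + 1 ≤ p.natDegree) with hF2
      set N := G.image eraseLead ∪ G.image (fun p => derivative p) ∪
        (F2 ×ˢ G).image (fun pq => prem pq.1 pq.2) with hN
      have hNd : ∀ p ∈ N, p.natDegree < e + 1 := by
        intro p hp
        simp only [hN, hG, hF2, Finset.mem_union, Finset.mem_image, Finset.mem_filter,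
          Finset.mem_product, Prod.exists] at hp
        rcases hp with (⟨q, ⟨_, hq⟩, rfl⟩ | ⟨q, ⟨_, hq⟩, rfl⟩) | ⟨q, r, ⟨⟨_, hq⟩, _, hr⟩, rfl⟩
        · rw [← hq]; exact natDegree_eraseLead_lt _ (by omega)
        · rw [← hq]; exact natDegree_derivative_lt (by omega)
        · rw [← hr]; exact (prem_spec q r (by omega)).1
      obtain ⟨T, hT, hTc⟩ := ih (F ∪ N) (by
        intro p hp hpe
        have hpF : p ∈ F := by
          rcases Finset.mem_union.1 hp with h | h
          · exact h
          · have := hNd p h; omega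
        refine ⟨?_, ?_, ?_⟩
        · rcases Nat.lt_or_ge (e+1) p.natDegree with h | h
          · exact Finset.mem_union_left _ (hF p hpF h).1
          · refine Finset.mem_union_right _ ?_
            simp only [hN, Finset.mem_union]
            left; left
            exact Finset.mem_image_of_mem _ (Finset.mem_filter.2 ⟨hpF, by omega⟩)
        · rcases Nat.lt_or_ge (e+1) p.natDegree with h | h
          · exact Finset.mem_union_left _ (hF p hpF h).2.1
          · refine Finset.mem_union_right _ ?_
            simp only [hN, Finset.mem_union]
            left; right
            exact Finset.mem_image_of_mem (fun p => derivative p)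
              (Finset.mem_filter.2 ⟨hpF, by omega⟩)
        · intro q hq hqe hqp
          have hqF : q ∈ F := by
            rcases Finset.mem_union.1 hq with h | h
            · exact h
            · have := hNd q h; omega
          rcases Nat.lt_or_ge (e+1) q.natDegree with h | h
          · exact Finset.mem_union_left _ ((hF p hpF (by omega)).2.2 q hqF h hqp)
          · refine Finset.mem_union_right _ ?_
            simp only [hN, Finset.mem_union]
            right
            exact Finset.mem_image.2 ⟨(p, q), Finset.mem_product.2
              ⟨Finset.mem_filter.2 ⟨hpF, by simp only; omega⟩, Finset.mem_filter.2 ⟨hqF, by simp only; omega⟩⟩, rfl⟩)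
      exact ⟨T, (Finset.subset_union_left).trans hT, hTc⟩
  refine key (F.sup natDegree) F ?_
  intro p hp hlt
  have := Finset.le_sup (f := natDegree) hp
  omega

/-- Evaluate a polynomial with coefficients specialised at `x`. -/
noncomputable abbrev pe {R B : Type*} [CommRing R] (ev : B → R →+* ℝ) (p : R[X]) (x : B) (t : ℝ) : ℝ :=
  p.eval₂ (ev x) t

def Good {R B : Type*} [CommRing R] [TopologicalSpace B] (ev : B → R →+* ℝ)
    (T : Finset R[X]) : Prop :=
  ∃ Ξ : Finset (B → ℝ), (∀ ξ ∈ Ξ, Continuous ξ) ∧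
    (∀ ξ ∈ Ξ, ∀ η ∈ Ξ, ξ ≠ η → ∀ x, ξ x ≠ η x) ∧
    (∀ p ∈ T, (∀ x t, pe ev p x t = 0) ∨ (∀ x t, pe ev p x t = 0 → ∃ ξ ∈ Ξ, ξ x = t)) ∧
    (∀ p ∈ T, ∀ ξ ∈ Ξ, (∀ x, pe ev p x (ξ x) = 0) ∨ (∀ x, pe ev p x (ξ x) ≠ 0)) ∧
    (∀ ξ ∈ Ξ, ∃ q ∈ T, 0 < q.natDegree ∧ (∀ x, ev x q.leadingCoeff ≠ 0) ∧
      ∀ x, pe ev q x (ξ x) = 0)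

theorem pe_continuous {R B : Type*} [CommRing R] [TopologicalSpace B] (ev : B → R →+* ℝ)
    (p : R[X]) (hc : ∀ i, Continuous (fun x => ev x (p.coeff i))) :
    Continuous (fun z : B × ℝ => pe ev p z.1 z.2) := by
  simp only [pe, eval₂_eq_sum_range]
  refine continuous_finsetSum _ fun i _ => ?_
  exact ((hc i).comp continuous_fst).mul (continuous_snd.pow i)

theorem pe_hasDerivAt {R B : Type*} [CommRing R] (ev : B → R →+* ℝ)
    (p : R[X]) (x : B) (t : ℝ) :
    HasDerivAt (pe ev p x) (pe ev (derivative p) x t) t := by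
  have := (p.map (ev x)).hasDerivAt t
  rw [derivative_map, eval_map] at this
  refine this.congr_of_eventuallyEq (Eventually.of_forall fun s => ?_)
  simp only [eval_map]

theorem pe_root_bound {R B : Type*} [CommRing R] [TopologicalSpace B] (ev : B → R →+* ℝ)
    (p : R[X]) (hc : ∀ i, Continuous (fun x => ev x (p.coeff i)))
    (hl : ∀ x, ev x p.leadingCoeff ≠ 0) (x₀ : B) :
    ∃ M : ℝ, ∀ᶠ x in 𝓝 x₀, ∀ t, pe ev p x t = 0 → |t| ≤ M := by
  set b : B → ℝ := fun x => 1 + (∑ i ∈ Finset.range p.natDegree, |ev x (p.coeff i)|) /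
    |ev x p.leadingCoeff| with hb
  have hbc : Continuous b := by
    refine continuous_const.add ((continuous_finsetSum _ fun i _ => (hc i).abs).div
      (hc _).abs fun x => abs_ne_zero.2 (hl x))
  refine ⟨b x₀ + 1, ?_⟩
  filter_upwards [hbc.continuousAt.eventually (gt_mem_nhds (lt_add_one (b x₀)))] with x hx t ht
  refine le_trans ?_ hx.le
  have hlp : 0 < |ev x p.leadingCoeff| := abs_pos.2 (hl x)
  by_cases h1 : |t| ≤ 1
  · refine h1.trans ?_
    simp only [hb, le_add_iff_nonneg_right]
    positivity
  push Not at h1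
  simp only [pe, eval₂_eq_sum_range, Finset.sum_range_succ] at ht
  have h2 : |ev x p.leadingCoeff| * |t| ^ p.natDegree ≤
      ∑ i ∈ Finset.range p.natDegree, |ev x (p.coeff i)| * |t| ^ i := by
    have : ev x p.leadingCoeff * t ^ p.natDegree =
        - ∑ i ∈ Finset.range p.natDegree, ev x (p.coeff i) * t ^ i := by
      rw [leadingCoeff]; linarith
    rw [← abs_pow, ← abs_mul, this, abs_neg]
    refine (Finset.abs_sum_le_sum_abs _ _).trans (le_of_eq ?_)
    simp [abs_mul, abs_pow]
  have h3 : |ev x p.leadingCoeff| * |t| ≤ ∑ i ∈ Finset.range p.natDegree, |ev x (p.coeff i)| := by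
    rcases Nat.eq_zero_or_pos p.natDegree with h0 | h0
    · rw [h0] at h2; simp at h2; exact absurd h2 (hl x)
    have hpos : 0 < |t| ^ (p.natDegree - 1) := by positivity
    refine le_of_mul_le_mul_right ?_ hpos
    calc _ = |ev x p.leadingCoeff| * |t| ^ p.natDegree := by
          rw [mul_assoc, ← pow_succ', Nat.sub_add_cancel h0]
      _ ≤ _ := h2
      _ ≤ _ := by
        rw [Finset.sum_mul]
        refine Finset.sum_le_sum fun i hi => ?_
        gcongr
        · exact h1.le
        · have := Finset.mem_range.1 hi; omega
  simp only [hb]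
  rw [mul_comm, ← le_div_iff₀ hlp] at h3
  linarith

end HX

end

section
open Polynomial Filter Topology

namespace HX

open Classical in
theorem good_step {R B : Type*} [CommRing R] [TopologicalSpace B] [FirstCountableTopology B]
    [ConnectedSpace B] (ev : B → R →+* ℝ) (T : Finset R[X]) (p : R[X])
    (hc : ∀ i, Continuous (fun x => ev x (p.coeff i)))
    (hpd : 0 < p.natDegree)
    (hl : ∀ x, ev x p.leadingCoeff ≠ 0)
    (hder : derivative p ∈ T)
    (hrem : ∀ q ∈ T, 0 < q.natDegree → prem p q ∈ T)
    (hG : Good ev T) : Good ev (insert p T) := by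
  obtain ⟨Ξ, hΞc, hΞd, hg1, hg2, hg3⟩ := hG
  have hpc := pe_continuous ev p hc
  -- zero-constancy of p on old roots
  have h0 : ∀ ξ ∈ Ξ, (∀ x, pe ev p x (ξ x) = 0) ∨ (∀ x, pe ev p x (ξ x) ≠ 0) := by
    intro ξ hξ
    obtain ⟨q, hqT, hq0, hql, hqr⟩ := hg3 ξ hξ
    obtain ⟨-, s, k, hs⟩ := prem_spec p q hq0
    have hkey : ∀ x, (ev x q.leadingCoeff) ^ k * pe ev p x (ξ x) = pe ev (prem p q) x (ξ x) := by
      intro x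
      have := congrArg (eval₂ (ev x) (ξ x)) hs
      rw [eval₂_mul, eval₂_add, eval₂_mul, eval₂_C, map_pow] at this
      have h2 := hqr x
      simp only [pe] at h2 ⊢
      rw [this, h2]; ring
    rcases hg2 _ (hrem q hqT hq0) ξ hξ with h | h
    · left; intro x
      have := hkey x
      rw [h x] at this
      exact (mul_eq_zero.1 this).resolve_left (pow_ne_zero _ (hql x))
    · right; intro x hx
      have := hkey x
      rw [hx, mul_zero] at this
      exact h x this.symm
  have hd : ∀ x t, pe ev (derivative p) x t = 0 → ∃ ξ ∈ Ξ, ξ x = t := by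
    rcases hg1 _ hder with h | h
    · exfalso
      obtain ⟨x⟩ := (inferInstance : Nonempty B)
      have h2 : (derivative p).map (ev x) = 0 := by
        refine Polynomial.funext fun t => ?_
        rw [eval_map, eval_zero]; exact h x t
      have h3 := congrArg (fun q => coeff q (p.natDegree - 1)) h2
      simp only [coeff_map, coeff_derivative, coeff_zero] at h3
      rw [Nat.sub_add_cancel hpd, map_mul, coeff_natDegree] at h3
      rcases mul_eq_zero.1 h3 with h4 | h4
      · exact hl x h4
      · rw [map_add, map_natCast, map_one] at h4
        have : (0:ℝ) ≤ ((p.natDegree - 1 : ℕ) : ℝ) := Nat.cast_nonneg _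
        linarith
    · exact h
  have rolle : ∀ x a b, a < b → pe ev p x a = 0 → pe ev p x b = 0 →
      ∃ ξ ∈ Ξ, a < ξ x ∧ ξ x < b := by
    intro x a b hab ha hb
    obtain ⟨c, hc, hc0⟩ := exists_hasDerivAt_eq_zero hab
      (fun t _ => (pe_hasDerivAt ev p x t).continuousAt.continuousWithinAt) (ha.trans hb.symm)
      (fun t _ => pe_hasDerivAt ev p x t)
    obtain ⟨ξ, hξ, hx⟩ := hd x c hc0
    exact ⟨ξ, hξ, hx ▸ hc.1, hx ▸ hc.2⟩
  set gap : Finset (B → ℝ) → B → ℝ → Prop :=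
    fun L x t => ∀ ξ ∈ Ξ, (ξ ∈ L → ξ x < t) ∧ (ξ ∉ L → t < ξ x) with hgap
  have uniq' : ∀ L x t t', gap L x t → gap L x t' → pe ev p x t = 0 → pe ev p x t' = 0 →
      ¬ t < t' := by
    intro L x t t' h h' hz hz' hlt
    obtain ⟨ξ, hξ, h1, h2⟩ := rolle x t t' hlt hz hz'
    by_cases hL : ξ ∈ L
    · exact lt_asymm h1 ((h ξ hξ).1 hL)
    · exact lt_asymm h2 ((h' ξ hξ).2 hL)
  have uniq : ∀ L x t t', gap L x t → gap L x t' → pe ev p x t = 0 → pe ev p x t' = 0 → t = t' := by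
    intro L x t t' h h' hz hz'
    exact le_antisymm (not_lt.1 (uniq' L x t' t h' h hz' hz)) (not_lt.1 (uniq' L x t t' h h' hz hz'))
  have gap_open : ∀ L x t, gap L x t → ∀ᶠ z : B × ℝ in 𝓝 (x, t), gap L z.1 z.2 := by
    intro L x t h
    simp only [hgap]
    rw [Filter.eventually_all_finset]
    intro ξ hξ
    have hcξ : Continuous (fun z : B × ℝ => ξ z.1) := (hΞc ξ hξ).comp continuous_fst
    by_cases hL : ξ ∈ L
    · filter_upwards [(isOpen_lt hcξ continuous_snd).mem_nhds (x := (x, t)) ((h ξ hξ).1 hL)] with z hz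
      exact ⟨fun _ => hz, fun h => absurd hL h⟩
    · filter_upwards [(isOpen_lt continuous_snd hcξ).mem_nhds (x := (x, t)) ((h ξ hξ).2 hL)] with z hz
      exact ⟨fun h => absurd h hL, fun _ => hz⟩
  -- local continuation of roots
  have loc : ∀ L x t, gap L x t → pe ev p x t = 0 → ∀ τ > 0, ∀ᶠ y in 𝓝 x,
      ∃ s, |s - t| < τ ∧ gap L y s ∧ pe ev p y s = 0 := by
    intro L x t hg hz τ hτ
    have hne : pe ev (derivative p) x t ≠ 0 := by
      intro h
      obtain ⟨ξ, hξ, hx⟩ := hd x t h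
      by_cases hL : ξ ∈ L
      · exact ((hg ξ hξ).1 hL).ne hx
      · exact ((hg ξ hξ).2 hL).ne hx.symm
    have hprod := (gap_open L x t hg)
    rw [nhds_prod_eq, eventually_prod_iff] at hprod
    obtain ⟨P1, hP1, P2, hP2, hP⟩ := hprod
    obtain ⟨ε, hε, hP2'⟩ := Metric.eventually_nhds_iff.1 hP2
    -- signs
    obtain ⟨σ, hσ0, hσε, hsign⟩ : ∃ σ, 0 < σ ∧ σ < min ε τ ∧
        pe ev p x (t - σ) * pe ev p x (t + σ) < 0 := by
      have hD := pe_hasDerivAt ev p x t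
      have hs := hD.tendsto_slope
      have h1 : ∀ᶠ s in 𝓝[≠] t, 0 < slope (pe ev p x) t s * pe ev (derivative p) x t := by
        have := hs.mul_const (pe ev (derivative p) x t)
        exact this.eventually (lt_mem_nhds (mul_self_pos.2 hne))
      rw [eventually_nhdsWithin_iff, Metric.eventually_nhds_iff] at h1
      obtain ⟨κ, hκ, h1⟩ := h1
      refine ⟨min (min ε τ) κ / 2, by positivity, ?_, ?_⟩
      · have : min (min ε τ) κ ≤ min ε τ := min_le_left _ _
        have : 0 < min ε τ := by positivity
        linarith
      · set σ := min (min ε τ) κ / 2 with hσ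
        have hσ0 : 0 < σ := by positivity
        have hσκ : σ < κ := by
          have : min (min ε τ) κ ≤ κ := min_le_right _ _
          linarith
        have ha := h1 (y := t - σ) (by simp [abs_of_pos hσ0, hσκ])
          (by simp [hσ0.ne'])
        have hb := h1 (y := t + σ) (by simp [abs_of_pos hσ0, hσκ])
          (by simp [hσ0.ne'])
        rw [slope_def_field, hz] at ha hb
        simp only [sub_zero, sub_sub_cancel_left, add_sub_cancel_left] at ha hb
        have h5 := mul_pos ha hb
        have h6 : 0 < - (pe ev p x (t - σ) * pe ev p x (t + σ)) *
            ((pe ev (derivative p) x t) ^ 2 / σ ^ 2) := by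
          have : - (pe ev p x (t - σ) * pe ev p x (t + σ)) *
            ((pe ev (derivative p) x t) ^ 2 / σ ^ 2) = pe ev p x (t - σ) / -σ * pe ev (derivative p) x t * (pe ev p x (t + σ) / σ * pe ev (derivative p) x t) := by
            field_simp
          rw [this]; exact h5
        have h7 : 0 ≤ ((pe ev (derivative p) x t) ^ 2 / σ ^ 2) := by positivity
        have := pos_of_mul_pos_left h6 h7
        linarith
    have hcont : Continuous (fun y => pe ev p y (t - σ) * pe ev p y (t + σ)) :=
      (hpc.comp (continuous_id.prodMk continuous_const)).mul
        (hpc.comp (continuous_id.prodMk continuous_const))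
    filter_upwards [hP1, hcont.continuousAt.eventually (gt_mem_nhds hsign)] with y hy1 hy2
    have hcy : Continuous (pe ev p y) := hpc.comp (continuous_const.prodMk continuous_id)
    obtain ⟨s, hs, hs0⟩ : ∃ s ∈ Set.Icc (t - σ) (t + σ), pe ev p y s = 0 := by
      have hle : t - σ ≤ t + σ := by linarith
      rcases mul_neg_iff.1 hy2 with ⟨h1, h2⟩ | ⟨h1, h2⟩
      · exact intermediate_value_Icc' hle hcy.continuousOn ⟨h2.le, h1.le⟩
      · exact intermediate_value_Icc hle hcy.continuousOn ⟨h1.le, h2.le⟩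
    have hst : |s - t| ≤ σ := abs_le.2 ⟨by linarith [hs.1], by linarith [hs.2]⟩
    refine ⟨s, lt_of_le_of_lt hst (hσε.trans_le (min_le_right _ _)), ?_, hs0⟩
    refine hP hy1 (hP2' ?_)
    rw [Real.dist_eq]
    exact lt_of_le_of_lt hst (hσε.trans_le (min_le_left _ _))
  set XL : Finset (B → ℝ) → Set B := fun L => {x | ∃ t, gap L x t ∧ pe ev p x t = 0} with hXL
  have XL_open : ∀ L, IsOpen (XL L) := by
    intro L
    rw [isOpen_iff_mem_nhds]
    rintro x ⟨t, hg, hz⟩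
    filter_upwards [loc L x t hg hz 1 one_pos] with y ⟨s, _, h1, h2⟩
    exact ⟨s, h1, h2⟩
  have XL_closed : ∀ L, IsClosed (XL L) := by
    intro L
    refine IsSeqClosed.isClosed ?_
    intro xs x hxs hx
    choose ts hts hzs using hxs
    obtain ⟨M, hM⟩ := pe_root_bound ev p hc hl x
    have hM' : ∀ᶠ k in atTop, ts k ∈ Set.Icc (-M) M := by
      filter_upwards [hx.eventually hM] with k hk
      exact abs_le.1 (hk _ (hzs k))
    obtain ⟨t, -, φ, hφ, hφt⟩ := isCompact_Icc.tendsto_subseq' hM'.frequently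
    have hxφ := hx.comp hφ.tendsto_atTop
    have hzt : pe ev p x t = 0 := by
      have h1 : Tendsto (fun k => pe ev p (xs (φ k)) (ts (φ k))) atTop (𝓝 (pe ev p x t)) :=
        (hpc.tendsto (x, t)).comp (hxφ.prodMk_nhds hφt)
      simp only [hzs] at h1
      exact (tendsto_nhds_unique h1 tendsto_const_nhds)
    refine ⟨t, ?_, hzt⟩
    have hξt : ∀ ξ ∈ Ξ, Tendsto (fun k => ξ (xs (φ k))) atTop (𝓝 (ξ x)) := fun ξ hξ =>
      ((hΞc ξ hξ).tendsto x).comp hxφ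
    have hne : ∀ ξ ∈ Ξ, ξ x ≠ t := by
      intro ξ hξ hxt
      have hz0 : ∀ y, pe ev p y (ξ y) = 0 := by
        rcases h0 ξ hξ with h | h
        · exact h
        · exact absurd (by rw [hxt]; exact hzt) (h x)
      -- other roots stay away
      have hk1 : ∀ k, ∃ ζ ∈ Ξ, ζ ≠ ξ ∧ |ζ (xs (φ k)) - ξ (xs (φ k))| ≤ |ts (φ k) - ξ (xs (φ k))| := by
        intro k
        have hnek : ts (φ k) ≠ ξ (xs (φ k)) := by
          intro h
          by_cases hL : ξ ∈ L
          · exact (((hts (φ k)) ξ hξ).1 hL).ne h.symm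
          · exact (((hts (φ k)) ξ hξ).2 hL).ne h
        rcases lt_or_gt_of_ne hnek with hlt | hlt
        · obtain ⟨ζ, hζ, h1, h2⟩ := rolle _ _ _ hlt (hzs _) (hz0 _)
          refine ⟨ζ, hζ, fun h => h2.ne (by rw [h]), ?_⟩
          rw [abs_of_neg (by linarith), abs_of_neg (by linarith)]; linarith
        · obtain ⟨ζ, hζ, h1, h2⟩ := rolle _ _ _ hlt (hz0 _) (hzs _)
          refine ⟨ζ, hζ, fun h => h1.ne (by rw [h]), ?_⟩
          rw [abs_of_pos (by linarith), abs_of_pos (by linarith)]; linarith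
      have hev : ∀ᶠ k in atTop, ∀ ζ ∈ Ξ, ζ ≠ ξ →
          |ts (φ k) - ξ (xs (φ k))| < |ζ (xs (φ k)) - ξ (xs (φ k))| := by
        rw [Filter.eventually_all_finset]
        intro ζ hζ
        by_cases hζξ : ζ = ξ
        · exact Eventually.of_forall fun k h => absurd hζξ h
        have h1 : Tendsto (fun k => |ts (φ k) - ξ (xs (φ k))|) atTop (𝓝 |t - ξ x|) :=
          (hφt.sub (hξt ξ hξ)).abs
        have h2 : Tendsto (fun k => |ζ (xs (φ k)) - ξ (xs (φ k))|) atTop (𝓝 |ζ x - ξ x|) :=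
          ((hξt ζ hζ).sub (hξt ξ hξ)).abs
        have h3 : |t - ξ x| < |ζ x - ξ x| := by
          rw [hxt, sub_self, abs_zero, abs_pos, sub_ne_zero, ← hxt]
          exact hΞd ζ hζ ξ hξ hζξ x
        filter_upwards [h1.eventually_lt h2 h3] with k hk _
        exact hk
      obtain ⟨k, hk⟩ := hev.exists
      obtain ⟨ζ, hζ, hne, hle⟩ := hk1 k
      exact absurd (hk ζ hζ hne) (not_lt.2 hle)
    intro ξ hξ
    constructor
    · intro hL
      refine lt_of_le_of_ne ?_ (hne ξ hξ)
      exact le_of_tendsto_of_tendsto' (hξt ξ hξ) hφt fun k => (((hts (φ k)) ξ hξ).1 hL).le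
    · intro hL
      refine lt_of_le_of_ne ?_ (hne ξ hξ).symm
      exact le_of_tendsto_of_tendsto' hφt (hξt ξ hξ) fun k => (((hts (φ k)) ξ hξ).2 hL).le
  have XL_all : ∀ L, (XL L).Nonempty → ∀ x, x ∈ XL L := by
    intro L hne x
    have := IsClopen.eq_univ ⟨XL_closed L, XL_open L⟩ hne
    rw [this]; trivial
  set η : Finset (B → ℝ) → B → ℝ := fun L x =>
    if h : ∃ t, gap L x t ∧ pe ev p x t = 0 then h.choose else 0 with hη
  have hηs : ∀ L x, x ∈ XL L → gap L x (η L x) ∧ pe ev p x (η L x) = 0 := by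
    intro L x hx
    have hx' : ∃ t, gap L x t ∧ pe ev p x t = 0 := hx
    simp only [hη]
    rw [dif_pos hx']
    exact Exists.choose_spec hx
  have hηc : ∀ L, (XL L).Nonempty → Continuous (η L) := by
    intro L hne
    rw [continuous_iff_continuousAt]
    intro x
    rw [Metric.continuousAt_iff']
    intro τ hτ
    obtain ⟨hg, hz⟩ := hηs L x (XL_all L hne x)
    filter_upwards [loc L x _ hg hz τ hτ] with y ⟨s, hs, h1, h2⟩
    obtain ⟨hg', hz'⟩ := hηs L y (XL_all L hne y)
    rw [uniq L y _ _ hg' h1 hz' h2, Real.dist_eq]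
    exact hs
  set N := (Ξ.powerset.filter (fun L => (XL L).Nonempty)).image η with hN
  have hηΞ : ∀ L, (XL L).Nonempty → ∀ ξ ∈ Ξ, ∀ x, ξ x ≠ η L x := by
    intro L hne ξ hξ x h
    have hg := (hηs L x (XL_all L hne x)).1 ξ hξ
    by_cases hL : ξ ∈ L
    · exact (hg.1 hL).ne h
    · exact (hg.2 hL).ne h.symm
  have memN : ∀ ζ, ζ ∈ N ↔ ∃ L, L ⊆ Ξ ∧ (XL L).Nonempty ∧ η L = ζ := by
    intro ζ
    simp only [hN, Finset.mem_image, Finset.mem_filter, Finset.mem_powerset]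
    tauto
  have hcov : ∀ x t, pe ev p x t = 0 → ∃ ξ ∈ Ξ ∪ N, ξ x = t := by
    intro x t hz
    by_cases h : ∃ ξ ∈ Ξ, ξ x = t
    · obtain ⟨ξ, hξ, h⟩ := h
      exact ⟨ξ, Finset.mem_union_left _ hξ, h⟩
    push Not at h
    set L := Ξ.filter (fun ξ => ξ x < t) with hL
    have hg : gap L x t := by
      intro ξ hξ
      simp only [hL, Finset.mem_filter, hξ, true_and]
      exact ⟨id, fun h' => lt_of_le_of_ne (not_lt.1 h') (h ξ hξ).symm⟩
    have hx : x ∈ XL L := ⟨t, hg, hz⟩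
    refine ⟨η L, Finset.mem_union_right _ ((memN _).2 ⟨L, Finset.filter_subset _ _, ⟨x, hx⟩, rfl⟩), ?_⟩
    obtain ⟨h1, h2⟩ := hηs L x hx
    exact uniq L x _ _ h1 hg h2 hz
  refine ⟨Ξ ∪ N, ?_, ?_, ?_, ?_, ?_⟩
  · intro ζ hζ
    rcases Finset.mem_union.1 hζ with h | h
    · exact hΞc ζ h
    · obtain ⟨L, _, hne, rfl⟩ := (memN _).1 h
      exact hηc L hne
  · intro ζ hζ ζ' hζ' hne x
    rcases Finset.mem_union.1 hζ with h | h <;> rcases Finset.mem_union.1 hζ' with h' | h'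
    · exact hΞd ζ h ζ' h' hne x
    · obtain ⟨L, _, hn, rfl⟩ := (memN _).1 h'
      exact hηΞ L hn ζ h x
    · obtain ⟨L, _, hn, rfl⟩ := (memN _).1 h
      exact (hηΞ L hn ζ' h' x).symm
    · obtain ⟨L, hLs, hLn, rfl⟩ := (memN _).1 h
      obtain ⟨L', hLs', hLn', rfl⟩ := (memN _).1 h'
      intro heq
      apply hne
      have hLL : L = L' := by
        have hg := (hηs L x (XL_all L hLn x)).1
        have hg' := (hηs L' x (XL_all L' hLn' x)).1
        ext ξ
        constructor
        · intro hξ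
          by_contra hξ'
          have h1 := (hg ξ (hLs hξ)).1 hξ
          have h2 := (hg' ξ (hLs hξ)).2 hξ'
          linarith
        · intro hξ
          by_contra hξ'
          have h1 := (hg' ξ (hLs' hξ)).1 hξ
          have h2 := (hg ξ (hLs' hξ)).2 hξ'
          linarith
      rw [hLL]
  · intro q hq
    rcases Finset.mem_insert.1 hq with rfl | hq
    · right; exact hcov
    · rcases hg1 q hq with h | h
      · left; exact h
      · right
        intro x t hz
        obtain ⟨ξ, hξ, h⟩ := h x t hz
        exact ⟨ξ, Finset.mem_union_left _ hξ, h⟩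
  · intro q hq ζ hζ
    rcases Finset.mem_insert.1 hq with rfl | hq
    · rcases Finset.mem_union.1 hζ with h | h
      · exact h0 ζ h
      · obtain ⟨L, hLs, hLn, rfl⟩ := (memN _).1 h
        left; intro x
        exact (hηs L x (XL_all L hLn x)).2
    · rcases Finset.mem_union.1 hζ with h | h
      · exact hg2 q hq ζ h
      · obtain ⟨L, hLs, hLn, rfl⟩ := (memN _).1 h
        rcases hg1 q hq with h | h
        · left; intro x; exact h x _
        · right; intro x hz
          obtain ⟨ξ, hξ, h⟩ := h x _ hz
          exact hηΞ L hLn ξ hξ x h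
  · intro ζ hζ
    rcases Finset.mem_union.1 hζ with h | h
    · obtain ⟨q, hq, h⟩ := hg3 ζ h
      exact ⟨q, Finset.mem_insert_of_mem hq, h⟩
    · obtain ⟨L, hLs, hLn, rfl⟩ := (memN _).1 h
      exact ⟨p, Finset.mem_insert_self _ _, hpd, hl, fun x => (hηs L x (XL_all L hLn x)).2⟩

open Classical in
theorem good_closed {R B : Type*} [CommRing R] [TopologicalSpace B] [FirstCountableTopology B]
    [ConnectedSpace B] (ev : B → R →+* ℝ) (T : Finset R[X]) (hT : ClosedAbove 0 T)
    (hc : ∀ p ∈ T, ∀ i, Continuous (fun x => ev x (p.coeff i)))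
    (hl : ∀ p ∈ T, (∀ x, ev x p.leadingCoeff = 0) ∨ (∀ x, ev x p.leadingCoeff ≠ 0)) :
    Good ev T := by
  induction hn : T.card generalizing T with
  | zero =>
    rw [Finset.card_eq_zero] at hn
    subst hn
    exact ⟨∅, by simp, by simp, by simp, by simp, by simp⟩
  | succ n ih =>
    have hne : T.Nonempty := by rw [← Finset.card_pos]; omega
    obtain ⟨p, hp, hmax⟩ := T.exists_max_image natDegree hne
    have hcl : ClosedAbove 0 (T.erase p) := by
      intro q hq hq0
      have hqT := Finset.mem_of_mem_erase hq
      obtain ⟨h1, h2, h3⟩ := hT q hqT hq0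
      have hqp := hmax q hqT
      have aux : ∀ r ∈ T, r.natDegree < q.natDegree → r ∈ T.erase p := by
        intro r hr hrq
        refine Finset.mem_erase.2 ⟨?_, hr⟩
        rintro rfl; omega
      refine ⟨aux _ h1 (natDegree_eraseLead_lt _ hq0), aux _ h2 (natDegree_derivative_lt hq0.ne'), ?_⟩
      intro r hr hr0 hrq
      refine aux _ (h3 r (Finset.mem_of_mem_erase hr) hr0 hrq) ?_
      exact (prem_spec q r hr0).1.trans_le hrq
    have hgood := ih (T.erase p) hcl (fun q hq => hc q (Finset.mem_of_mem_erase hq))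
      (fun q hq => hl q (Finset.mem_of_mem_erase hq)) (by rw [Finset.card_erase_of_mem hp]; omega)
    rw [← Finset.insert_erase hp]
    -- reduction to another polynomial with the same values
    have simple : (∃ q ∈ T.erase p, ∀ x t, pe ev p x t = pe ev q x t) →
        Good ev (insert p (T.erase p)) := by
      rintro ⟨q, hq, hpq⟩
      obtain ⟨Ξ, a1, a2, a3, a4, a5⟩ := hgood
      refine ⟨Ξ, a1, a2, ?_, ?_, ?_⟩
      · intro r hr
        rcases Finset.mem_insert.1 hr with rfl | hr
        · simp only [hpq]; exact a3 q hq
        · exact a3 r hr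
      · intro r hr
        rcases Finset.mem_insert.1 hr with rfl | hr
        · simp only [hpq]; exact a4 q hq
        · exact a4 r hr
      · intro ξ hξ
        obtain ⟨q, hq, h⟩ := a5 ξ hξ
        exact ⟨q, Finset.mem_insert_of_mem hq, h⟩
    rcases Nat.eq_zero_or_pos p.natDegree with h0 | h0
    · have hpe : ∀ x t, pe ev p x t = ev x p.leadingCoeff := by
        intro x t
        have := eq_C_of_natDegree_eq_zero h0
        simp only [pe]
        conv_lhs => rw [this]
        rw [eval₂_C, leadingCoeff, h0]
      obtain ⟨Ξ, a1, a2, a3, a4, a5⟩ := hgood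
      refine ⟨Ξ, a1, a2, ?_, ?_, ?_⟩
      · intro r hr
        rcases Finset.mem_insert.1 hr with rfl | hr
        · simp only [hpe]
          rcases hl r hp with h | h
          · left; exact fun x _ => h x
          · right; exact fun x _ h' => absurd h' (h x)
        · exact a3 r hr
      · intro r hr ξ hξ
        rcases Finset.mem_insert.1 hr with rfl | hr
        · simp only [hpe]; exact hl r hp
        · exact a4 r hr ξ hξ
      · intro ξ hξ
        obtain ⟨q, hq, h⟩ := a5 ξ hξ
        exact ⟨q, Finset.mem_insert_of_mem hq, h⟩
    · obtain ⟨h1, h2, h3⟩ := hT p hp h0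
      have aux : ∀ r ∈ T, r.natDegree < p.natDegree → r ∈ T.erase p := by
        intro r hr hrq
        refine Finset.mem_erase.2 ⟨?_, hr⟩
        rintro rfl; omega
      rcases hl p hp with h | h
      · refine simple ⟨p.eraseLead, aux _ h1 (natDegree_eraseLead_lt _ h0), fun x t => ?_⟩
        have := eraseLead_add_C_mul_X_pow p
        simp only [pe]
        conv_lhs => rw [← this]
        rw [eval₂_add, eval₂_mul, eval₂_C, h x]; simp
      · refine good_step ev _ p (hc p hp) h0 h (aux _ h2 (natDegree_derivative_lt h0.ne')) ?_ hgood
        intro q hq hq0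
        have hqT := Finset.mem_of_mem_erase hq
        refine aux _ (h3 q hqT hq0 (hmax q hqT)) ?_
        exact (prem_spec p q hq0).1.trans_le (hmax q hqT)

end HX

end

section
open Filter Topology

noncomputable section

namespace HX

/-- Absolutely summable real sequences. -/
abbrev L1 : Type := ↥(lp (fun _ : ℕ => ℝ) 1)

theorem L1_summable (v : L1) : Summable fun k => |v k| := by
  have := (lp.hasSum_norm (p := 1) (by simp) v).summable
  simpa using this

theorem L1_norm_eq (v : L1) : ‖v‖ = ∑' k, |v k| := by
  have := lp.norm_eq_tsum_rpow (p := 1) (by simp) v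
  simpa using this

/-- Build an element. -/
def L1_mk (a : ℕ → ℝ) (h : Summable fun k => |a k|) : L1 :=
  ⟨a, memℓp_gen (by simpa using h)⟩

theorem L1_mk_apply (a : ℕ → ℝ) (h : Summable fun k => |a k|) (k : ℕ) : L1_mk a h k = a k := rfl

theorem shift_hasSum (j : ℕ) (a : ℕ → ℝ) (s : ℝ) (h : HasSum a s) :
    HasSum (fun k => if j ≤ k then a (k - j) else 0) s := by
  have hinj : Function.Injective (fun k => k + j) := add_left_injective j
  have := hinj.hasSum_iff (f := fun k => if j ≤ k then a (k - j) else 0) (a := s) (by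
    intro k hk
    have : ¬ j ≤ k := by
      intro h
      exact hk ⟨k - j, by simp; omega⟩
    simp [this])
  refine this.1 ?_
  have h2 : (fun k => if j ≤ k then a (k - j) else 0) ∘ (fun k => k + j) = a := by
    ext k
    simp
  rw [h2]
  exact h

theorem shift_summable (j : ℕ) (v : L1) :
    HasSum (fun k => |if j ≤ k then v (k - j) else 0|) ‖v‖ := by
  have := shift_hasSum j _ _ (L1_summable v).hasSum
  rw [← L1_norm_eq] at this
  convert this using 2 with k
  split_ifs <;> simp

/-- Shift by `j`. -/
def shiftL (j : ℕ) : L1 →L[ℝ] L1 :=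
  LinearMap.mkContinuous
    { toFun := fun v => L1_mk _ (shift_summable j v).summable
      map_add' := by
        intro v w
        ext k
        simp only [L1_mk_apply, lp.coeFn_add, Pi.add_apply]
        split_ifs <;> simp
      map_smul' := by
        intro c w
        ext k
        simp only [L1_mk_apply, lp.coeFn_smul, Pi.smul_apply, RingHom.id_apply]
        split_ifs <;> simp } 1 (by
    intro v
    rw [L1_norm_eq, one_mul]
    exact (shift_summable j v).tsum_eq.le)

theorem shiftL_apply (j : ℕ) (v : L1) (k : ℕ) :
    shiftL j v k = if j ≤ k then v (k - j) else 0 := rfl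

/-- Basis vector inclusion. -/
def sgl (k : ℕ) : ℝ →L[ℝ] L1 := lp.singleContinuousLinearMap ℝ (fun _ : ℕ => ℝ) 1 k

theorem sgl_apply (k : ℕ) (a : ℝ) (j : ℕ) : sgl k a j = if j = k then a else 0 := by
  show lp.single (E := fun _ : ℕ => ℝ) 1 k a j = _
  rw [lp.single_apply]
  simp [Pi.single_apply]

theorem sgl_norm (k : ℕ) : ‖sgl k‖ ≤ 1 := by
  refine ContinuousLinearMap.opNorm_le_bound _ zero_le_one fun a => ?_
  rw [one_mul, L1_norm_eq]
  apply le_of_eq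
  rw [tsum_eq_single k]
  · simp [sgl_apply]
  · intro j hj
    simp [sgl_apply, hj]

theorem evl_summable {t : ℝ} (ht : |t| ≤ 1) (v : L1) : Summable fun k => |v k * t ^ k| := by
  refine Summable.of_nonneg_of_le (fun _ => abs_nonneg _) (fun k => ?_) (L1_summable v)
  rw [abs_mul, abs_pow]
  exact mul_le_of_le_one_right (abs_nonneg _) (pow_le_one₀ (abs_nonneg _) ht)

theorem evl_bound {t : ℝ} (ht : |t| ≤ 1) (v : L1) : ‖∑' k, v k * t ^ k‖ ≤ 1 * ‖v‖ := by
  rw [L1_norm_eq, one_mul]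
  have h1 := evl_summable ht v
  refine (norm_tsum_le_tsum_norm (f := fun k => v k * t ^ k)
    (by simpa only [Real.norm_eq_abs] using h1)).trans ?_
  simp only [Real.norm_eq_abs]
  refine Summable.tsum_le_tsum (fun k => ?_) h1 (L1_summable v)
  rw [abs_mul, abs_pow]
  exact mul_le_of_le_one_right (abs_nonneg _) (pow_le_one₀ (abs_nonneg _) ht)

theorem evl_add {t : ℝ} (ht : |t| ≤ 1) (v w : L1) :
    ∑' k, (v + w) k * t ^ k = ∑' k, v k * t ^ k + ∑' k, w k * t ^ k := by
  rw [← ((evl_summable ht v).of_abs).tsum_add ((evl_summable ht w).of_abs)]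
  congr 1
  ext k
  rw [lp.coeFn_add, Pi.add_apply, add_mul]

theorem evl_smul (t : ℝ) (c : ℝ) (w : L1) :
    ∑' k, (c • w) k * t ^ k = c * ∑' k, w k * t ^ k := by
  rw [← tsum_mul_left]
  congr 1
  ext k
  rw [lp.coeFn_smul, Pi.smul_apply, smul_eq_mul, mul_assoc]

/-- Evaluation of the power series at `t`. -/
def evl (t : ℝ) (ht : |t| ≤ 1) : L1 →L[ℝ] ℝ :=
  LinearMap.mkContinuous
    { toFun := fun v => ∑' k, v k * t ^ k
      map_add' := evl_add ht
      map_smul' := evl_smul t } 1 (evl_bound ht)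

theorem evl_apply (t : ℝ) (ht : |t| ≤ 1) (v : L1) : evl t ht v = ∑' k, v k * t ^ k := rfl

theorem evl_norm (t : ℝ) (ht : |t| ≤ 1) (v : L1) : |evl t ht v| ≤ ‖v‖ := by
  have := evl_bound ht v
  rwa [one_mul] at this

theorem evl_sgl (t : ℝ) (ht : |t| ≤ 1) (k : ℕ) (a : ℝ) : evl t ht (sgl k a) = a * t ^ k := by
  rw [evl_apply, tsum_eq_single k]
  · simp [sgl_apply]
  · intro j hj
    simp [sgl_apply, hj]

theorem evl_shiftL (t : ℝ) (ht : |t| ≤ 1) (j : ℕ) (v : L1) :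
    evl t ht (shiftL j v) = t ^ j * evl t ht v := by
  rw [evl_apply, evl_apply]
  have h := shift_hasSum j _ _ ((evl_summable ht v).of_abs.hasSum.mul_left (t ^ j))
  rw [← h.tsum_eq]
  congr 1
  ext k
  rw [shiftL_apply]
  split_ifs with hk
  · rw [show t ^ k = t ^ j * t ^ (k - j) by rw [← pow_add]; congr 1; omega]
    ring
  · simp

theorem shiftL_sgl (j k : ℕ) (a : ℝ) : shiftL j (sgl k a) = sgl (j + k) a := by
  ext i
  rw [shiftL_apply, sgl_apply, sgl_apply]
  split_ifs <;> first | rfl | omega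

end HX

end

end

section
open Filter Topology
open scoped NNReal ENNReal

noncomputable section

namespace HX

section
variable {E : Type*} [NormedAddCommGroup E] [NormedSpace ℝ E]

/-- Coefficient maps. -/
def cco (p : FormalMultilinearSeries ℝ (E × ℝ) ℝ) (δ : ℝ) (n k : ℕ) :
    ContinuousMultilinearMap ℝ (fun _ : Fin n => E) ℝ :=
  (p.changeOriginSeries n k (fun _ => ((0 : E), δ))).compContinuousLinearMap
    (fun _ => ContinuousLinearMap.inl ℝ E ℝ)

theorem cco_norm (p : FormalMultilinearSeries ℝ (E × ℝ) ℝ) (δ : ℝ≥0) (n k : ℕ) :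
    ‖cco p δ n k‖₊ ≤ ‖p.changeOriginSeries n k‖₊ * δ ^ k := by
  have h1 : ‖cco p δ n k‖ ≤ ‖p.changeOriginSeries n k (fun _ => ((0 : E), (δ : ℝ)))‖ *
      ∏ _i : Fin n, ‖ContinuousLinearMap.inl ℝ E ℝ‖ :=
    ContinuousMultilinearMap.norm_compContinuousLinearMap_le _ _
  have h2 : ∏ _i : Fin n, ‖ContinuousLinearMap.inl ℝ E ℝ‖ ≤ 1 := by
    apply Finset.prod_le_one
    · intros; positivity
    · intros
      exact ContinuousLinearMap.norm_inl_le_one ℝ E ℝ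
  have h3 : ‖p.changeOriginSeries n k (fun _ => ((0 : E), (δ : ℝ)))‖ ≤
      ‖p.changeOriginSeries n k‖ * δ ^ k := by
    refine (ContinuousMultilinearMap.le_opNorm _ _).trans ?_
    simp [Prod.norm_def]
  have : ‖cco p δ n k‖ ≤ ‖p.changeOriginSeries n k‖ * δ ^ k :=
    h1.trans ((mul_le_of_le_one_right (norm_nonneg _) h2).trans h3)
  exact_mod_cast this

/-- The series with values in `L1`. -/
def qser (p : FormalMultilinearSeries ℝ (E × ℝ) ℝ) (δ : ℝ) :
    FormalMultilinearSeries ℝ E L1 := fun n =>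
  ∑' k, (sgl k).compContinuousMultilinearMap (cco p δ n k)

theorem qterm_norm (p : FormalMultilinearSeries ℝ (E × ℝ) ℝ) (δ : ℝ≥0) (n k : ℕ) :
    ‖(sgl k).compContinuousMultilinearMap (cco p δ n k)‖₊ ≤ ‖p.changeOriginSeries n k‖₊ * δ ^ k := by
  have h1 := ContinuousLinearMap.norm_compContinuousMultilinearMap_le (sgl k) (cco p δ n k)
  have h2 : ‖(sgl k).compContinuousMultilinearMap (cco p δ n k)‖ ≤ ‖cco p δ n k‖ :=
    h1.trans (mul_le_of_le_one_left (norm_nonneg _) (sgl_norm k))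
  exact le_trans (by exact_mod_cast h2) (cco_norm p δ n k)

theorem qterm_summable (p : FormalMultilinearSeries ℝ (E × ℝ) ℝ) (δ : ℝ≥0) (hδ : (δ : ℝ≥0∞) < p.radius)
    (n : ℕ) :
    Summable fun k => (sgl k).compContinuousMultilinearMap (cco p δ n k) :=
  Summable.of_nnnorm_bounded (p.changeOriginSeries_summable_aux₃ hδ n) (qterm_norm p δ n)

theorem qser_radius (p : FormalMultilinearSeries ℝ (E × ℝ) ℝ) (δ r : ℝ≥0)
    (hδ : (δ : ℝ≥0∞) + r < p.radius) : (r : ℝ≥0∞) ≤ (qser p δ).radius := by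
  have hδ' : (δ : ℝ≥0∞) < p.radius := (le_add_right le_rfl).trans_lt hδ
  apply FormalMultilinearSeries.le_radius_of_summable_nnnorm
  have key (k : ℕ) : ‖qser p δ k‖₊ * r ^ k ≤
        (∑' s : Σ l : ℕ, { s : Finset (Fin (k + l)) // s.card = l }, ‖p (k + s.1)‖₊ * δ ^ s.1) *
          r ^ k := by
    gcongr
    have hs := p.changeOriginSeries_summable_aux₂ hδ' k
    refine tsum_of_nnnorm_bounded (HasSum.sigma hs.hasSum fun l =>
      ((NNReal.summable_sigma.1 hs).1 l).hasSum) fun l => ?_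
    refine (qterm_norm p δ k l).trans ?_
    show _ ≤ ∑' _b : { s : Finset (Fin (k + l)) // s.card = l }, ‖p (k + l)‖₊ * δ ^ l
    rw [NNReal.tsum_mul_right]
    gcongr
    exact p.nnnorm_changeOriginSeries_le_tsum k l
  refine NNReal.summable_of_le key ?_
  simpa only [← NNReal.tsum_mul_right] using
    (NNReal.summable_sigma.1 (p.changeOriginSeries_summable_aux₁ hδ)).2

theorem qser_eval (p : FormalMultilinearSeries ℝ (E × ℝ) ℝ) (δ r : ℝ≥0)
    (hδ : (δ : ℝ≥0∞) + r < p.radius) (x : E) (hx : ‖x‖ < r) (t : ℝ) (ht : |t| ≤ 1) :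
    evl t ht ((qser p δ).sum x) = p.sum (x, δ * t) := by
  have hδ' : (δ : ℝ≥0∞) < p.radius := (le_add_right le_rfl).trans_lt hδ
  have hte : ‖((0 : E), (δ : ℝ) * t)‖₊ ≤ δ := by
    rw [← NNReal.coe_le_coe]
    simp only [coe_nnnorm, Prod.norm_def, norm_zero, norm_mul, Real.norm_eq_abs]
    rw [max_eq_right (by positivity)]
    simpa using mul_le_of_le_one_right δ.2 ht
  have hxe : ‖(x, (0 : ℝ))‖₊ ≤ r := by
    rw [← NNReal.coe_le_coe]
    simp [Prod.norm_def, hx.le]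
  have h1 : (p.changeOrigin ((0 : E), (δ : ℝ) * t)).sum (x, (0 : ℝ)) = p.sum (x, δ * t) := by
    rw [p.changeOrigin_eval]
    · simp
    · refine lt_of_le_of_lt ?_ hδ
      gcongr
  rw [← h1]
  have hx' : x ∈ Metric.eball (0 : E) (qser p δ).radius := by
    rw [mem_eball_zero_iff]
    refine lt_of_lt_of_le ?_ (qser_radius p δ r hδ)
    rw [enorm_eq_nnnorm]
    exact_mod_cast hx
  have h2 := ((qser p δ).hasSum hx').mapL (evl t ht)
  rw [← h2.tsum_eq]
  unfold FormalMultilinearSeries.sum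
  congr 1
  ext n
  have h3 := (ContinuousMultilinearMap.hasSum_eval (qterm_summable p δ hδ' n).hasSum
    (fun _ => x)).mapL (evl t ht)
  show evl t ht ((∑' k, (sgl k).compContinuousMultilinearMap (cco p δ n k)) fun _ => x) = _
  rw [← h3.tsum_eq]
  have hmem : ((0 : E), (δ : ℝ) * t) ∈ Metric.eball (0 : E × ℝ) p.radius := by
    rw [mem_eball_zero_iff]
    refine lt_of_le_of_lt ?_ hδ'
    rw [enorm_eq_nnnorm]
    exact_mod_cast hte
  have h4 := (p.hasFPowerSeriesOnBall_changeOrigin n (by exact pos_of_gt hδ')).hasSum hmem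
  rw [zero_add] at h4
  have h5 := ContinuousMultilinearMap.hasSum_eval h4 (fun _ => (x, (0 : ℝ)))
  rw [← h5.tsum_eq]
  congr 1
  ext k
  have h6 : ((0 : E), (δ : ℝ) * t) = t • ((0 : E), (δ : ℝ)) := by
    ext <;> simp [mul_comm]
  have h7 : (p.changeOriginSeries n k) (fun _ => ((0 : E), (δ : ℝ) * t)) =
      t ^ k • (p.changeOriginSeries n k) (fun _ => ((0 : E), (δ : ℝ))) := by
    rw [h6]
    have := (p.changeOriginSeries n k).map_smul_univ (fun _ => t) (fun _ => ((0 : E), (δ : ℝ)))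
    simpa using this
  rw [h7]
  show evl t ht (sgl k (cco p δ n k fun _ => x)) = _
  rw [evl_sgl, _root_.smul_apply, smul_eq_mul, mul_comm]
  rfl

theorem exists_L1_lift {f : E × ℝ → ℝ} (hf : AnalyticAt ℝ f 0) (δ₀ : ℝ) (hδ₀ : 0 < δ₀) :
    ∃ δ > 0, δ < δ₀ ∧ ∃ F : E → L1, AnalyticAt ℝ F 0 ∧
      ∀ᶠ x in 𝓝 (0 : E), ∀ t (ht : |t| ≤ 1), evl t ht (F x) = f (x, δ * t) := by
  obtain ⟨p, R, hp⟩ := hf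
  obtain ⟨r, hr0, hrR⟩ := ENNReal.lt_iff_exists_nnreal_btwn.1 hp.r_pos
  have hr0' : 0 < r := by exact_mod_cast hr0
  set δ : ℝ≥0 := min (r / 2) (⟨δ₀ / 2, by positivity⟩ : ℝ≥0) with hδ
  have hδpos : 0 < δ := by
    rw [hδ]
    refine lt_min (by positivity) ?_
    exact NNReal.coe_lt_coe.1 (show (0 : ℝ) < δ₀ / 2 by positivity)
  have hδr : δ ≤ r / 2 := min_le_left _ _
  have hδδ : (δ : ℝ) < δ₀ := by
    have : δ ≤ (⟨δ₀ / 2, by positivity⟩ : ℝ≥0) := min_le_right _ _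
    have h2 : (δ : ℝ) ≤ δ₀ / 2 := by exact_mod_cast this
    linarith
  have hsum : (δ : ℝ≥0∞) + δ < p.radius := by
    refine lt_of_lt_of_le (lt_of_le_of_lt ?_ hrR) hp.r_le
    have : δ + δ ≤ r := by
      calc δ + δ ≤ r / 2 + r / 2 := add_le_add hδr hδr
        _ = r := add_halves r
    exact_mod_cast this
  refine ⟨δ, by exact_mod_cast hδpos, hδδ, (qser p δ).sum, ?_, ?_⟩
  · refine ((qser p δ).hasFPowerSeriesOnBall ?_).analyticAt
    exact lt_of_lt_of_le (by exact_mod_cast hδpos) (qser_radius p δ δ hsum)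
  · have : ∀ᶠ x in 𝓝 (0 : E), ‖x‖ < δ := by
      have := Metric.ball_mem_nhds (0 : E) (show (0 : ℝ) < δ by exact_mod_cast hδpos)
      filter_upwards [this] with x hx
      simpa using hx
    filter_upwards [this] with x hx t ht
    rw [qser_eval p δ δ hsum x hx t ht]
    have := hp.sum (y := (x, (δ : ℝ) * t)) (by
      rw [mem_eball_zero_iff, enorm_eq_nnnorm]
      refine lt_of_le_of_lt ?_ hrR
      have : ‖(x, (δ : ℝ) * t)‖₊ ≤ δ := by
        rw [← NNReal.coe_le_coe]
        simp only [coe_nnnorm, Prod.norm_def, norm_mul, Real.norm_eq_abs]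
        refine max_le hx.le ?_
        simpa using mul_le_of_le_one_right δ.2 ht
      have h2 : δ ≤ r := hδr.trans (NNReal.half_le_self r)
      exact_mod_cast this.trans h2)
    rw [← this, zero_add]

end
end HX

end

end

section
open Filter Topology

noncomputable section

namespace HX

/-- Tail of a sequence. -/
def tl (j : ℕ) (v : L1) : L1 :=
  L1_mk (fun i => v (i + j)) ((summable_nat_add_iff (f := fun k => |v k|) j).2 (L1_summable v))

theorem tl_apply (j : ℕ) (v : L1) (i : ℕ) : tl j v i = v (i + j) := rfl

theorem evl_tl (t : ℝ) (ht : |t| ≤ 1) (w : L1) :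
    evl t ht w = w 0 + t * evl t ht (tl 1 w) := by
  have : w = sgl 0 (w 0) + shiftL 1 (tl 1 w) := by
    ext i
    rw [lp.coeFn_add, Pi.add_apply, sgl_apply, shiftL_apply, tl_apply]
    rcases i with _ | i <;> simp
  conv_lhs => rw [this]
  rw [map_add, evl_sgl, evl_shiftL]
  simp

theorem evl_inj (v : L1) (h : ∀ t (ht : |t| ≤ 1), evl t ht v = 0) : v = 0 := by
  have key : ∀ k, ∀ i, i < k → v i = 0 := by
    intro k
    induction k with
    | zero => intro i hi; omega
    | succ k ih =>
      have hv : v = shiftL k (tl k v) := by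
        ext i
        rw [shiftL_apply, tl_apply]
        split_ifs with hik
        · rw [Nat.sub_add_cancel hik]
        · exact ih i (by omega)
      set w := tl k v with hw
      have h1 : ∀ t (ht : |t| ≤ 1), t ≠ 0 → evl t ht w = 0 := by
        intro t ht h0
        have := h t ht
        rw [hv, evl_shiftL] at this
        exact (mul_eq_zero.1 this).resolve_left (pow_ne_zero _ h0)
      have h2 : w 0 = 0 := by
        by_contra hne
        set M := ‖tl 1 w‖ + 1 with hM
        have hMpos : 0 < M := by positivity
        set t := min 1 (|w 0| / (2 * M)) with htdef
        have htpos : 0 < t := lt_min one_pos (by positivity)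
        have ht : |t| ≤ 1 := by rw [abs_of_pos htpos]; exact min_le_left _ _
        have h3 := h1 t ht htpos.ne'
        rw [evl_tl] at h3
        have h4 := evl_norm t ht (tl 1 w)
        have h5 : |w 0| = t * |evl t ht (tl 1 w)| := by
          rw [show w 0 = -(t * evl t ht (tl 1 w)) by linarith, abs_neg, abs_mul, abs_of_pos htpos]
        have h6 : t * |evl t ht (tl 1 w)| ≤ |w 0| / (2 * M) * M := by
          gcongr
          · exact min_le_right _ _
          · linarith
        have h7 : |w 0| / (2 * M) * M = |w 0| / 2 := by field_simp
        have : 0 < |w 0| := abs_pos.2 hne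
        linarith
      intro i hi
      rcases Nat.lt_succ_iff_lt_or_eq.1 hi with h3 | h3
      · exact ih i h3
      · rw [h3]
        rw [hw, tl_apply, zero_add] at h2
        exact h2
  ext i
  exact key (i + 1) i (by omega)

/-- The multiplication map. -/
def PhiM (d : ℕ) (z : L1 × (Fin d → ℝ)) : L1 :=
  shiftL d z.1 + ∑ j : Fin d, z.2 j • shiftL j z.1

/-- Its derivative. -/
def PhiD (d : ℕ) (c : ℝ) : (L1 × (Fin d → ℝ)) →L[ℝ] L1 :=
  (shiftL d).comp (ContinuousLinearMap.fst ℝ L1 (Fin d → ℝ)) +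
    ∑ j : Fin d, ((ContinuousLinearMap.proj j).comp
      (ContinuousLinearMap.snd ℝ L1 (Fin d → ℝ))).smulRight (sgl (j : ℕ) c)

theorem PhiM_analytic (d : ℕ) (z : L1 × (Fin d → ℝ)) : AnalyticAt ℝ (PhiM d) z := by
  unfold PhiM
  refine AnalyticAt.add ?_ ?_
  · exact ((shiftL d).comp (ContinuousLinearMap.fst ℝ L1 (Fin d → ℝ))).analyticAt z
  · refine Finset.analyticAt_fun_sum _ fun j _ => ?_
    have h1 := ((ContinuousLinearMap.proj (R := ℝ) (φ := fun _ : Fin d => ℝ) j).comp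
        (ContinuousLinearMap.snd ℝ L1 (Fin d → ℝ))).analyticAt z
    have h2 := ((shiftL j).comp (ContinuousLinearMap.fst ℝ L1 (Fin d → ℝ))).analyticAt z
    exact h1.smul h2

theorem PhiM_deriv (d : ℕ) (c : ℝ) :
    HasFDerivAt (PhiM d) (PhiD d c) (sgl 0 c, 0) := by
  unfold PhiM PhiD
  refine HasFDerivAt.add ?_ ?_
  · exact ((shiftL d).comp (ContinuousLinearMap.fst ℝ L1 (Fin d → ℝ))).hasFDerivAt
  · refine HasFDerivAt.fun_sum fun j _ => ?_
    have h1 := ((ContinuousLinearMap.proj (R := ℝ) (φ := fun _ : Fin d => ℝ) j).comp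
        (ContinuousLinearMap.snd ℝ L1 (Fin d → ℝ))).hasFDerivAt (x := (sgl 0 c, 0))
    have h2 := ((shiftL j).comp (ContinuousLinearMap.fst ℝ L1 (Fin d → ℝ))).hasFDerivAt
      (x := (sgl 0 c, 0))
    have h3 := h1.smul h2
    convert! h3 using 1
    ext z
    · simp
    · simp [shiftL_sgl]

theorem PhiD_bij (d : ℕ) (c : ℝ) (hc : c ≠ 0) : Function.Bijective (PhiD d c) := by
  have happ : ∀ (v : L1) (a : Fin d → ℝ) (i : ℕ), PhiD d c (v, a) i =
      (if d ≤ i then v (i - d) else 0) + ∑ j : Fin d, a j * (if i = j then c else 0) := by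
    intro v a i
    simp only [PhiD, _root_.add_apply, ContinuousLinearMap.comp_apply, ContinuousLinearMap.coe_fst',
      _root_.sum_apply, ContinuousLinearMap.smulRight_apply, ContinuousLinearMap.coe_snd',
      ContinuousLinearMap.proj_apply, lp.coeFn_add, Pi.add_apply, lp.coeFn_sum, Finset.sum_apply,
      lp.coeFn_smul, Pi.smul_apply, smul_eq_mul, shiftL_apply, sgl_apply]
  have hlo : ∀ (v : L1) (a : Fin d → ℝ) (i : Fin d), PhiD d c (v, a) i = a i * c := by
    intro v a i
    rw [happ, if_neg (by omega), zero_add, Finset.sum_eq_single i]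
    · simp
    · intro j _ hj
      rw [if_neg, mul_zero]
      intro h
      exact hj (Fin.ext h.symm)
    · simp
  have hhi : ∀ (v : L1) (a : Fin d → ℝ) (i : ℕ), PhiD d c (v, a) (i + d) = v i := by
    intro v a i
    rw [happ, if_pos (by omega), Finset.sum_eq_zero]
    · simp
    · intro j _
      rw [if_neg (by omega), mul_zero]
  constructor
  · rw [injective_iff_map_eq_zero]
    rintro ⟨v, a⟩ h
    have h1 : v = 0 := by
      ext i
      rw [← hhi v a i, h]
      rfl
    have h2 : a = 0 := by
      ext i
      have := hlo v a i
      rw [h] at this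
      have h3 : a i * c = 0 := this.symm
      simpa [hc] using h3
    rw [h1, h2]
    rfl
  · intro w
    refine ⟨(tl d w, fun j => w j / c), ?_⟩
    ext i
    by_cases hi : d ≤ i
    · obtain ⟨k, rfl⟩ := Nat.exists_eq_add_of_le' hi
      rw [hhi, tl_apply]
    · have := hlo (tl d w) (fun j => w j / c) ⟨i, by omega⟩
      simp only at this
      rw [this]
      field_simp

theorem weierstrass {E : Type*} [NormedAddCommGroup E] [NormedSpace ℝ E]
    {f : E × ℝ → ℝ} (hf : AnalyticAt ℝ f 0) (h0 : ¬ ∀ᶠ t in 𝓝 (0 : ℝ), f (0, t) = 0) :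
    ∃ (d : ℕ) (b : ℕ → E → ℝ), (∀ j, AnalyticAt ℝ (b j) 0) ∧
      ∀ᶠ z in 𝓝 (0 : E × ℝ), f z = 0 ↔ ∑ j ∈ Finset.range (d + 1), b j z.1 * z.2 ^ j = 0 := by
  have hg : AnalyticAt ℝ (fun t : ℝ => f (0, t)) 0 := by
    have h2 : AnalyticAt ℝ (fun t : ℝ => ((0 : E), t)) 0 :=
      (ContinuousLinearMap.inr ℝ E ℝ).analyticAt 0
    exact AnalyticAt.comp (g := f) (f := fun t : ℝ => ((0 : E), t)) (x := 0) hf h2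
  obtain ⟨d, u, hu, hu0, hgu⟩ := hg.exists_eventuallyEq_pow_smul_nonzero_iff.2 h0
  have hune : ∀ᶠ t in 𝓝 (0 : ℝ), u t ≠ 0 := hu.continuousAt.eventually_ne hu0
  obtain ⟨δ₀, hδ₀, hball⟩ := Metric.eventually_nhds_iff.1 (hgu.and hune)
  have hf' : AnalyticAt ℝ (fun z : E × ℝ => f z / u z.2) 0 := by
    refine hf.div ?_ hu0
    exact AnalyticAt.comp (g := u) (f := fun z : E × ℝ => z.2) (x := 0) hu
      ((ContinuousLinearMap.snd ℝ E ℝ).analyticAt 0)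
  obtain ⟨δ, hδ, hδδ, F, hF, hFe⟩ := exists_L1_lift hf' δ₀ hδ₀
  set c := δ ^ d with hc
  have hcpos : 0 < c := by positivity
  have hF0 : F 0 = sgl d c := by
    rw [← sub_eq_zero]
    apply evl_inj
    intro t ht
    have h1 := hFe.self_of_nhds t ht
    rw [map_sub, h1, evl_sgl]
    have h2 : dist (δ * t) 0 < δ₀ := by
      rw [dist_zero_right, norm_mul, Real.norm_eq_abs, Real.norm_eq_abs, abs_of_pos hδ]
      nlinarith
    obtain ⟨h3, h4⟩ := hball h2
    simp only [sub_zero, smul_eq_mul] at h3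
    rw [h3, mul_div_assoc, div_self h4, hc]
    ring
  let i : (L1 × (Fin d → ℝ)) ≃L[ℝ] L1 :=
    ContinuousLinearEquiv.ofBijective (PhiD d c)
      (LinearMap.ker_eq_bot.2 (PhiD_bij d c hcpos.ne').1)
      (LinearMap.range_eq_top.2 (PhiD_bij d c hcpos.ne').2)
  have hi : (i : (L1 × (Fin d → ℝ)) →L[ℝ] L1) = PhiD d c := by
    ext z <;> rfl
  set z₀ : L1 × (Fin d → ℝ) := (sgl 0 c, 0) with hz₀
  have hder : HasFDerivAt (PhiM d) (i : (L1 × (Fin d → ℝ)) →L[ℝ] L1) z₀ := by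
    rw [hi]; exact PhiM_deriv d c
  have hstr : HasStrictFDerivAt (PhiM d) (i : (L1 × (Fin d → ℝ)) →L[ℝ] L1) z₀ := by
    have := (PhiM_analytic d z₀).hasStrictFDerivAt
    rwa [hder.fderiv] at this
  let Ψ := hstr.toOpenPartialHomeomorph (PhiM d)
  have hz₀s : z₀ ∈ Ψ.source := hstr.mem_toOpenPartialHomeomorph_source
  have hΨ : ∀ z, Ψ z = PhiM d z := fun z => rfl
  have hz₀i : PhiM d z₀ = F 0 := by
    rw [hF0]
    simp [PhiM, hz₀, shiftL_sgl]
  have hsymm : AnalyticAt ℝ Ψ.symm (F 0) := by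
    rw [← hz₀i]
    exact Ψ.analyticAt_symm' hz₀s (PhiM_analytic d z₀) hder.fderiv
  have hs0 : Ψ.symm (F 0) = z₀ := by
    rw [← hz₀i]
    exact Ψ.left_inv hz₀s
  set G : E → L1 × (Fin d → ℝ) := fun x => Ψ.symm (F x) with hG
  have hGan : AnalyticAt ℝ G 0 := AnalyticAt.comp (g := Ψ.symm) (f := F) (x := 0) hsymm hF
  have hG0 : G 0 = z₀ := hs0
  have hGeq : ∀ᶠ x in 𝓝 (0 : E), PhiM d (G x) = F x := by
    have h1 : Ψ.target ∈ 𝓝 (F 0) := by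
      apply Ψ.open_target.mem_nhds
      rw [← hz₀i]
      exact Ψ.map_source hz₀s
    filter_upwards [hF.continuousAt h1] with x hx
    exact Ψ.right_inv hx
  have hGnear : ∀ᶠ x in 𝓝 (0 : E), ‖(G x).1 - sgl 0 c‖ < c := by
    have h1 : ContinuousAt (fun x => (G x).1) 0 := continuous_fst.continuousAt.comp hGan.continuousAt
    have h2 := h1 (Metric.ball_mem_nhds (G 0).1 hcpos)
    filter_upwards [h2] with x hx
    have hx' : dist (G x).1 (G 0).1 < c := hx
    rw [hG0, dist_eq_norm] at hx'
    exact hx'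
  refine ⟨d, fun j x => if h : j < d then (G x).2 ⟨j, h⟩ / δ ^ j else 1 / δ ^ j, ?_, ?_⟩
  · intro j
    by_cases h : j < d
    · simp only [h, dite_true]
      refine AnalyticAt.div ?_ analyticAt_const (by positivity)
      exact AnalyticAt.comp (g := fun z : L1 × (Fin d → ℝ) => z.2 ⟨j, h⟩) (f := G) (x := 0)
        (((ContinuousLinearMap.proj (R := ℝ) (φ := fun _ : Fin d => ℝ) ⟨j, h⟩).comp
        (ContinuousLinearMap.snd ℝ L1 (Fin d → ℝ))).analyticAt _) hGan
    · simp only [h, dite_false]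
      exact analyticAt_const
  · have hfst : Tendsto (fun z : E × ℝ => z.1) (𝓝 0) (𝓝 0) := continuous_fst.tendsto' _ _ rfl
    have hsnd : Tendsto (fun z : E × ℝ => z.2) (𝓝 0) (𝓝 0) := continuous_snd.tendsto' _ _ rfl
    have hsm : ∀ᶠ t in 𝓝 (0 : ℝ), |t| < δ := by
      filter_upwards [Metric.ball_mem_nhds (0 : ℝ) hδ] with t ht
      simpa using ht
    filter_upwards [hfst.eventually hFe, hfst.eventually hGeq, hfst.eventually hGnear,
      hsnd.eventually hune, hsnd.eventually hsm] with z h1 h2 h3 h4 h5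
    have ht : |z.2 / δ| ≤ 1 := by
      rw [abs_div, abs_of_pos hδ, div_le_one hδ]
      exact h5.le
    have h6 := h1 (z.2 / δ) ht
    rw [mul_div_cancel₀ _ hδ.ne', ← h2] at h6
    have h7 : evl (z.2 / δ) ht (G z.1).1 ≠ 0 := by
      intro h
      have := evl_norm _ ht ((G z.1).1 - sgl 0 c)
      rw [map_sub, h, evl_sgl, pow_zero, mul_one, zero_sub, abs_neg, abs_of_pos hcpos] at this
      linarith
    have h8 : evl (z.2 / δ) ht (PhiM d (G z.1)) = evl (z.2 / δ) ht (G z.1).1 *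
        ∑ j ∈ Finset.range (d + 1), (if h : j < d then (G z.1).2 ⟨j, h⟩ / δ ^ j else 1 / δ ^ j) * z.2 ^ j := by
      rw [Finset.sum_range_succ, Finset.sum_range, PhiM, map_add, map_sum, evl_shiftL]
      simp only [lt_irrefl, dite_false, map_smul, evl_shiftL, smul_eq_mul, Fin.is_lt, dite_true]
      rw [mul_add, Finset.mul_sum, add_comm]
      congr 1
      · refine Finset.sum_congr rfl fun j _ => ?_
        rw [div_pow]; ring
      · rw [div_pow]; ring
    rw [h8] at h6
    have h9 : f z = 0 ↔ f (z.1, z.2) / u z.2 = 0 := by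
      rw [div_eq_zero_iff]
      simp [h4]
    rw [h9, ← h6, mul_eq_zero]
    simp [h7]

end HX

end

end

section
open Polynomial Filter Topology

namespace HX

theorem order_const {B : Type*} [TopologicalSpace B] [PreconnectedSpace B] {ξ η : B → ℝ}
    (hξ : Continuous ξ) (hη : Continuous η) (hne : ∀ x, ξ x ≠ η x) {x : B} (hx : ξ x < η x) (y : B) :
    ξ y < η y := by
  by_contra hy
  push Not at hy
  obtain ⟨z, hz⟩ := mem_range_of_exists_le_of_exists_ge (c := (0 : ℝ)) (hη.sub hξ)
    ⟨y, sub_nonpos.2 hy⟩ ⟨x, (sub_pos.2 hx).le⟩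
  exact hne z (by have : η z - ξ z = 0 := hz; linarith)

theorem exists_cells {R B : Type*} [CommRing R] [TopologicalSpace B] [PreconnectedSpace B]
    (ev : B → R →+* ℝ) (T : Finset R[X]) (hG : Good ev T) (δ : ℝ)
    (p₁ p₂ : R[X]) (hp₁ : p₁ ∈ T) (hp₂ : p₂ ∈ T) (h₁ : ∀ x t, pe ev p₁ x t = t - δ)
    (h₂ : ∀ x t, pe ev p₂ x t = t + δ) :
    ∃ 𝒞 : Set (Set (B × ℝ)), 𝒞.Finite ∧ (∀ C ∈ 𝒞, IsPreconnected C ∧ ∀ z ∈ C, |z.2| < δ) ∧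
      (∀ z : B × ℝ, |z.2| < δ → ∃ C ∈ 𝒞, z ∈ C) ∧
      ∀ C ∈ 𝒞, ∀ p ∈ T, (∀ z ∈ C, pe ev p z.1 z.2 = 0) ∨ (∀ z ∈ C, pe ev p z.1 z.2 ≠ 0) := by
  classical
  obtain ⟨Ξ, hc, hd, hroot, hsign, -⟩ := hG
  have hord : ∀ ξ ∈ Ξ, ∀ η ∈ Ξ, ∀ x, ξ x < η x → ∀ y, ξ y < η y := by
    intro ξ hξ η hη x hx y
    refine order_const (hc ξ hξ) (hc η hη) (hd ξ hξ η hη ?_) hx y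
    rintro rfl
    exact lt_irrefl _ hx
  have hcp : ∀ B₀ : B, ∃ ξ ∈ Ξ, ∀ x, ξ x = δ := by
    intro x₀
    obtain ⟨ξ, hξ, hx⟩ := (hroot p₁ hp₁).elim (fun h => absurd (h x₀ (δ + 1)) (by rw [h₁]; norm_num))
      (fun h => h x₀ δ (by rw [h₁]; ring))
    refine ⟨ξ, hξ, fun x => ?_⟩
    rcases hsign p₁ hp₁ ξ hξ with h | h
    · have := h x; rw [h₁] at this; linarith
    · exact absurd (by rw [h₁, hx]; ring) (h x₀)
  have hcm : ∀ B₀ : B, ∃ ξ ∈ Ξ, ∀ x, ξ x = -δ := by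
    intro x₀
    obtain ⟨ξ, hξ, hx⟩ := (hroot p₂ hp₂).elim (fun h => absurd (h x₀ (-δ + 1)) (by rw [h₂]; norm_num))
      (fun h => h x₀ (-δ) (by rw [h₂]; ring))
    refine ⟨ξ, hξ, fun x => ?_⟩
    rcases hsign p₂ hp₂ ξ hξ with h | h
    · have := h x; rw [h₂] at this; linarith
    · exact absurd (by rw [h₂, hx]; ring) (h x₀)
  set 𝒢 : Set (Set (B × ℝ)) := (fun ξ : B → ℝ => {z : B × ℝ | z.2 = ξ z.1}) ''
    {ξ | ξ ∈ Ξ ∧ ∀ x, |ξ x| < δ} with h𝒢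
  set P : Set ((B → ℝ) × (B → ℝ)) := {q | q.1 ∈ Ξ ∧ q.2 ∈ Ξ ∧ (∀ x, q.1 x < q.2 x) ∧
    (∀ x, -δ ≤ q.1 x) ∧ (∀ x, q.2 x ≤ δ) ∧ ∀ ζ ∈ Ξ, ∀ x, ¬ (q.1 x < ζ x ∧ ζ x < q.2 x)} with hP
  set 𝒮 : Set (Set (B × ℝ)) := (fun q : (B → ℝ) × (B → ℝ) =>
    {z : B × ℝ | q.1 z.1 < z.2 ∧ z.2 < q.2 z.1}) '' P with h𝒮
  refine ⟨𝒢 ∪ 𝒮, ?_, ?_, ?_, ?_⟩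
  · refine Set.Finite.union (Set.Finite.image _ ?_) (Set.Finite.image _ ?_)
    · exact Ξ.finite_toSet.subset fun ξ h => h.1
    · exact (Ξ ×ˢ Ξ).finite_toSet.subset fun q h => by
        simp only [Finset.coe_product, Set.mem_prod, Finset.mem_coe]
        exact ⟨h.1, h.2.1⟩
  · rintro C (⟨ξ, ⟨hξ, hb⟩, rfl⟩ | ⟨⟨ξ, η⟩, ⟨hξ, hη, hlt, hlo, hhi, -⟩, rfl⟩)
    · constructor
      · have : {z : B × ℝ | z.2 = ξ z.1} = Set.range (fun x => (x, ξ x)) := by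
          ext ⟨x, t⟩
          simp [eq_comm]
        show IsPreconnected {z : B × ℝ | z.2 = ξ z.1}
        rw [this]
        exact isPreconnected_range (by have := hc ξ hξ; fun_prop)
      · rintro ⟨x, t⟩ h
        have h' : t = ξ x := h
        simp only [h']
        exact hb x
    · simp only at hlt hlo hhi hξ hη
      constructor
      · have : {z : B × ℝ | ξ z.1 < z.2 ∧ z.2 < η z.1} =
            (fun w : B × ℝ => (w.1, (1 - w.2) * ξ w.1 + w.2 * η w.1)) ''
              (Set.univ ×ˢ Set.Ioo 0 1) := by
          ext ⟨x, t⟩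
          simp only [Set.mem_ofPred_eq, Set.mem_image, Set.mem_prod, Set.mem_univ, true_and,
            Set.mem_Ioo, Prod.mk.injEq, Prod.exists]
          have := hlt x
          constructor
          · rintro ⟨h1, h2⟩
            refine ⟨x, (t - ξ x) / (η x - ξ x), ⟨?_, ?_⟩, rfl, ?_⟩
            · exact div_pos (by linarith) (by linarith)
            · rw [div_lt_one (by linarith)]; linarith
            · have : η x - ξ x ≠ 0 := by linarith
              field_simp
              ring
          · rintro ⟨y, s, ⟨h1, h2⟩, rfl, rfl⟩
            constructor <;> nlinarith
        show IsPreconnected {z : B × ℝ | ξ z.1 < z.2 ∧ z.2 < η z.1}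
        rw [this]
        refine IsPreconnected.image ?_ _ ?_
        · exact isPreconnected_univ.prod isPreconnected_Ioo
        · have := hc ξ hξ
          have := hc η hη
          fun_prop
      · rintro ⟨x, t⟩ ⟨h1, h2⟩
        simp only at h1 h2
        have := hlo x
        have := hhi x
        exact abs_lt.2 ⟨by linarith, by linarith⟩
  · rintro ⟨x, t⟩ ht
    simp only at ht
    rw [abs_lt] at ht
    obtain ⟨ξp, hξp, hξpe⟩ := hcp x
    obtain ⟨ξm, hξm, hξme⟩ := hcm x
    by_cases h : ∃ ξ ∈ Ξ, ξ x = t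
    · obtain ⟨ξ, hξ, rfl⟩ := h
      refine ⟨_, Or.inl ⟨ξ, ⟨hξ, fun y => ?_⟩, rfl⟩, rfl⟩
      have h1 := hord ξ hξ ξp hξp x (by rw [hξpe]; exact ht.2) y
      have h2 := hord ξm hξm ξ hξ x (by rw [hξme]; exact ht.1) y
      rw [hξpe] at h1
      rw [hξme] at h2
      exact abs_lt.2 ⟨h2, h1⟩
    · push Not at h
      obtain ⟨ξ, hξ, hξmax⟩ := Finset.exists_max_image (Ξ.filter fun ξ => ξ x < t) (fun ξ => ξ x)
        ⟨ξm, Finset.mem_filter.2 ⟨hξm, by rw [hξme]; exact ht.1⟩⟩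
      obtain ⟨η, hη, hηmin⟩ := Finset.exists_min_image (Ξ.filter fun ξ => t < ξ x) (fun ξ => ξ x)
        ⟨ξp, Finset.mem_filter.2 ⟨hξp, by rw [hξpe]; exact ht.2⟩⟩
      rw [Finset.mem_filter] at hξ hη
      refine ⟨_, Or.inr ⟨(ξ, η), ⟨hξ.1, hη.1, ?_, ?_, ?_, ?_⟩, rfl⟩, ⟨hξ.2, hη.2⟩⟩
      · exact hord ξ hξ.1 η hη.1 x (hξ.2.trans hη.2)
      · intro y
        by_contra hy
        push Not at hy
        have h1 := hord ξ hξ.1 ξm hξm y (by rw [hξme]; exact hy) x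
        have h2 := hξmax ξm (Finset.mem_filter.2 ⟨hξm, by rw [hξme]; exact ht.1⟩)
        linarith
      · intro y
        by_contra hy
        push Not at hy
        have h1 := hord ξp hξp η hη.1 y (by rw [hξpe]; exact hy) x
        have h2 := hηmin ξp (Finset.mem_filter.2 ⟨hξp, by rw [hξpe]; exact ht.2⟩)
        linarith
      · rintro ζ hζ y ⟨h1, h2⟩
        have h3 := hord ξ hξ.1 ζ hζ y h1 x
        have h4 := hord ζ hζ η hη.1 y h2 x
        rcases lt_or_gt_of_ne (h ζ hζ) with h5 | h5
        · have := hξmax ζ (Finset.mem_filter.2 ⟨hζ, h5⟩)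
          linarith
        · have := hηmin ζ (Finset.mem_filter.2 ⟨hζ, h5⟩)
          linarith
  · rintro C (⟨ξ, ⟨hξ, hb⟩, rfl⟩ | ⟨⟨ξ, η⟩, ⟨hξ, hη, hlt, hlo, hhi, hadj⟩, rfl⟩) p hp
    · rcases hsign p hp ξ hξ with h | h
      · left
        rintro ⟨x, t⟩ hz
        have hz' : t = ξ x := hz
        simp only [hz']
        exact h x
      · right
        rintro ⟨x, t⟩ hz
        have hz' : t = ξ x := hz
        simp only [hz']
        exact h x
    · rcases hroot p hp with h | h
      · left
        rintro ⟨x, t⟩ hz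
        exact h x t
      · right
        rintro ⟨x, t⟩ ⟨h1, h2⟩ h0
        obtain ⟨ζ, hζ, hζt⟩ := h x t h0
        simp only at h1 h2
        exact hadj ζ hζ x ⟨by rw [hζt]; exact h1, by rw [hζt]; exact h2⟩

end HX

end

section
open Polynomial Filter Topology

noncomputable section

namespace HX

/-- Local stratification property at the origin. -/
def Strat (E : Type*) [NormedAddCommGroup E] [NormedSpace ℝ E] (𝓕 : Set (E → ℝ)) : Prop :=
  ∀ O ∈ 𝓝 (0 : E), ∃ 𝒞 : Set (Set E), 𝒞.Finite ∧ (∀ C ∈ 𝒞, IsPreconnected C ∧ C ⊆ O) ∧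
    ⋃₀ 𝒞 ∈ 𝓝 (0 : E) ∧ ∀ C ∈ 𝒞, ∀ f ∈ 𝓕, (∀ x ∈ C, f x = 0) ∨ (∀ x ∈ C, f x ≠ 0)

/-- The ring of functions analytic at the origin. -/
def anRing (E : Type*) [NormedAddCommGroup E] [NormedSpace ℝ E] : Subring (E → ℝ) where
  carrier := {g | AnalyticAt ℝ g 0}
  mul_mem' := fun ha hb => AnalyticAt.mul ha hb
  one_mem' := analyticAt_const
  add_mem' := fun ha hb => AnalyticAt.add ha hb
  zero_mem' := analyticAt_const
  neg_mem' := fun ha => AnalyticAt.neg ha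

/-- Evaluation. -/
def anEv (E : Type*) [NormedAddCommGroup E] [NormedSpace ℝ E] (x : E) : anRing E →+* ℝ :=
  (Pi.evalRingHom (fun _ : E => ℝ) x).comp (anRing E).subtype

theorem anEv_apply {E : Type*} [NormedAddCommGroup E] [NormedSpace ℝ E] (x : E) (g : anRing E) :
    anEv E x g = (g : E → ℝ) x := rfl

theorem exists_poly {E : Type*} [NormedAddCommGroup E] [NormedSpace ℝ E] {f : E × ℝ → ℝ}
    (hf : AnalyticAt ℝ f 0)
    (h0 : (∀ᶠ z in 𝓝 (0 : E × ℝ), f z = 0) ∨ ¬ ∀ᶠ t in 𝓝 (0 : ℝ), f (0, t) = 0) :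
    ∃ P : (anRing E)[X], ∀ᶠ z in 𝓝 (0 : E × ℝ), f z = 0 ↔ pe (anEv E) P z.1 z.2 = 0 := by
  rcases h0 with h0 | h0
  · refine ⟨0, ?_⟩
    filter_upwards [h0] with z hz
    simp [hz]
  · obtain ⟨d, b, hb, h⟩ := weierstrass hf h0
    refine ⟨∑ j ∈ Finset.range (d + 1), monomial j (⟨b j, hb j⟩ : anRing E), ?_⟩
    filter_upwards [h] with z hz
    rw [hz]
    simp [pe, eval₂_finsetSum, anEv_apply]

theorem strat_step {E : Type*} [NormedAddCommGroup E] [NormedSpace ℝ E]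
    (IH : ∀ 𝓕 : Set (E → ℝ), 𝓕.Finite → (∀ f ∈ 𝓕, AnalyticAt ℝ f 0) → Strat E 𝓕)
    (𝓕 : Set (E × ℝ → ℝ)) (hfin : 𝓕.Finite) (han : ∀ f ∈ 𝓕, AnalyticAt ℝ f 0)
    (hreg : ∀ f ∈ 𝓕, (∀ᶠ z in 𝓝 (0 : E × ℝ), f z = 0) ∨ ¬ ∀ᶠ t in 𝓝 (0 : ℝ), f (0, t) = 0) :
    Strat (E × ℝ) 𝓕 := by
  classical
  intro O hO
  have hex : ∀ f : E × ℝ → ℝ, ∃ P : (anRing E)[X], f ∈ 𝓕 →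
      ∀ᶠ z in 𝓝 (0 : E × ℝ), f z = 0 ↔ pe (anEv E) P z.1 z.2 = 0 := by
    intro f
    by_cases h : f ∈ 𝓕
    · obtain ⟨P, hP⟩ := exists_poly (han f h) (hreg f h)
      exact ⟨P, fun _ => hP⟩
    · exact ⟨0, fun h' => absurd h' h⟩
  choose P hP using hex
  have hall : ∀ᶠ z in 𝓝 (0 : E × ℝ), z ∈ O ∧ ∀ f ∈ 𝓕, (f z = 0 ↔ pe (anEv E) (P f) z.1 z.2 = 0) :=
    (eventually_mem_set.2 hO).and ((eventually_all_finite hfin).2 hP)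
  obtain ⟨N, hN, D, hD, hND⟩ := mem_nhds_prod_iff.1 (show {z | _} ∈ 𝓝 ((0 : E), (0 : ℝ)) from hall)
  obtain ⟨δ, hδ, hδD⟩ := Metric.mem_nhds_iff.1 hD
  have cst : ∀ c : ℝ, ∃ g : anRing E, ∀ x, anEv E x g = c := fun c =>
    ⟨⟨fun _ => c, analyticAt_const⟩, fun x => rfl⟩
  obtain ⟨gp, hgp⟩ := cst δ
  set p₁ : (anRing E)[X] := X - C gp with hp₁
  set p₂ : (anRing E)[X] := X + C gp with hp₂
  obtain ⟨T, hT, hTc⟩ := exists_closed (hfin.toFinset.image P ∪ {p₁, p₂})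
  have hco : ∀ᶠ x in 𝓝 (0 : E), ∀ p ∈ T, ∀ i ∈ p.support,
      AnalyticAt ℝ ((p.coeff i : anRing E) : E → ℝ) x := by
    refine (Filter.eventually_all_finset T).2 fun p _ => ?_
    refine (Filter.eventually_all_finset p.support).2 fun i _ => ?_
    exact (p.coeff i).2.eventually_analyticAt
  obtain ⟨𝒞, h𝒞fin, h𝒞, h𝒞n, h𝒞s⟩ := IH ((fun p : (anRing E)[X] => (p.leadingCoeff : E → ℝ)) '' T)
    (T.finite_toSet.image _) (by rintro _ ⟨p, _, rfl⟩; exact p.leadingCoeff.2)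
    (N ∩ {x | ∀ p ∈ T, ∀ i ∈ p.support, AnalyticAt ℝ ((p.coeff i : anRing E) : E → ℝ) x})
    (inter_mem hN hco)
  have hcell : ∀ X ∈ 𝒞, ∃ 𝒟 : Set (Set (E × ℝ)), 𝒟.Finite ∧
      (∀ C ∈ 𝒟, IsPreconnected C ∧ ∀ z ∈ C, z.1 ∈ X ∧ |z.2| < δ) ∧
      (∀ z : E × ℝ, z.1 ∈ X → |z.2| < δ → ∃ C ∈ 𝒟, z ∈ C) ∧
      ∀ C ∈ 𝒟, ∀ p ∈ T, (∀ z ∈ C, pe (anEv E) p z.1 z.2 = 0) ∨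
        (∀ z ∈ C, pe (anEv E) p z.1 z.2 ≠ 0) := by
    intro Y hY
    rcases Y.eq_empty_or_nonempty with hemp | hne
    · refine ⟨∅, Set.finite_empty, by simp, ?_, by simp⟩
      intro z hz
      rw [hemp] at hz
      exact absurd hz (Set.notMem_empty _)
    have hpre := (h𝒞 Y hY).1
    have hsub := (h𝒞 Y hY).2
    have : ConnectedSpace Y := isConnected_iff_connectedSpace.1 ⟨hne, hpre⟩
    set ev : Y → anRing E →+* ℝ := fun x => anEv E x with hev
    have hcont : ∀ p ∈ T, ∀ i, Continuous fun x : Y => ev x (p.coeff i) := by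
      intro p hp i
      by_cases hi : i ∈ p.support
      · rw [continuous_iff_continuousAt]
        intro x
        have h1 := ((hsub x.2).2 p hp i hi).continuousAt
        exact ContinuousAt.comp (f := fun x : Y => (x : E)) h1 continuous_subtype_val.continuousAt
      · rw [notMem_support_iff] at hi
        simp only [hi, map_zero]
        exact continuous_const
    have hlc : ∀ p ∈ T, (∀ x, ev x p.leadingCoeff = 0) ∨ (∀ x, ev x p.leadingCoeff ≠ 0) := by
      intro p hp
      rcases h𝒞s Y hY _ ⟨p, hp, rfl⟩ with h | h
      · left; intro x; exact h x x.2
      · right; intro x; exact h x x.2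
    have hgood := good_closed ev T hTc hcont hlc
    obtain ⟨𝒟, hf, h1, h2, h3⟩ := exists_cells ev T hgood δ p₁ p₂ (hT (by simp)) (hT (by simp))
      (by intro x t; simp [pe, hp₁, hev, hgp]) (by intro x t; simp [pe, hp₂, hev, hgp])
    have hmc : Continuous (fun z : Y × ℝ => ((z.1 : E), z.2)) := by fun_prop
    refine ⟨(fun C => (fun z : Y × ℝ => ((z.1 : E), z.2)) '' C) '' 𝒟, hf.image _, ?_, ?_, ?_⟩
    · rintro _ ⟨C, hC, rfl⟩
      refine ⟨(h1 C hC).1.image _ hmc.continuousOn, ?_⟩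
      rintro _ ⟨z, hz, rfl⟩
      exact ⟨z.1.2, (h1 C hC).2 z hz⟩
    · rintro ⟨x, t⟩ hx ht
      obtain ⟨C, hC, hz⟩ := h2 (⟨x, hx⟩, t) ht
      exact ⟨_, ⟨C, hC, rfl⟩, _, hz, rfl⟩
    · rintro _ ⟨C, hC, rfl⟩ p hp
      rcases h3 C hC p hp with h | h
      · left
        rintro _ ⟨z, hz, rfl⟩
        exact h z hz
      · right
        rintro _ ⟨z, hz, rfl⟩
        exact h z hz
  choose! 𝒟 h𝒟f h𝒟1 h𝒟2 h𝒟3 using hcell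
  have hOsub : ∀ Y ∈ 𝒞, ∀ C ∈ 𝒟 Y, ∀ z ∈ C, z ∈ O ∧
      ∀ f ∈ 𝓕, (f z = 0 ↔ pe (anEv E) (P f) z.1 z.2 = 0) := by
    intro Y hY C hC z hz
    have h1 := (h𝒟1 Y hY C hC).2 z hz
    refine hND (Set.mk_mem_prod ((h𝒞 Y hY).2 h1.1).1 (hδD ?_) : (z.1, z.2) ∈ N ×ˢ D)
    simpa using h1.2
  refine ⟨⋃ Y ∈ 𝒞, 𝒟 Y, h𝒞fin.biUnion h𝒟f, ?_, ?_, ?_⟩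
  · intro C hC
    simp only [Set.mem_iUnion] at hC
    obtain ⟨Y, hY, hC⟩ := hC
    exact ⟨(h𝒟1 Y hY C hC).1, fun z hz => (hOsub Y hY C hC z hz).1⟩
  · refine mem_of_superset (prod_mem_nhds h𝒞n (Metric.ball_mem_nhds (0 : ℝ) hδ)) ?_
    rintro ⟨x, t⟩ ⟨⟨Y, hY, hx⟩, ht⟩
    obtain ⟨C, hC, hz⟩ := h𝒟2 Y hY (x, t) hx (by simpa using ht)
    exact ⟨C, by simp only [Set.mem_iUnion]; exact ⟨Y, hY, hC⟩, hz⟩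
  · intro C hC f hf
    simp only [Set.mem_iUnion] at hC
    obtain ⟨Y, hY, hC⟩ := hC
    rcases h𝒟3 Y hY C hC (P f) (hT (by
      refine Finset.mem_union_left _ (Finset.mem_image_of_mem _ ?_)
      simpa using hf)) with h | h
    · left
      intro z hz
      exact ((hOsub Y hY C hC z hz).2 f hf).2 (h z hz)
    · right
      intro z hz h0
      exact h z hz (((hOsub Y hY C hC z hz).2 f hf).1 h0)

theorem strat_equiv {E E₁ : Type*} [NormedAddCommGroup E] [NormedSpace ℝ E]
    [NormedAddCommGroup E₁] [NormedSpace ℝ E₁] (e : E₁ ≃L[ℝ] E) (𝓕 : Set (E → ℝ))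
    (h : Strat E₁ ((fun f => f ∘ e) '' 𝓕)) : Strat E 𝓕 := by
  intro O hO
  obtain ⟨𝒞, h1, h2, h3, h4⟩ := h (e ⁻¹' O) (e.continuous.continuousAt.preimage_mem_nhds
    (by simpa using hO))
  refine ⟨(fun C => e '' C) '' 𝒞, h1.image _, ?_, ?_, ?_⟩
  · rintro _ ⟨C, hC, rfl⟩
    refine ⟨(h2 C hC).1.image _ e.continuous.continuousOn, ?_⟩
    rintro _ ⟨x, hx, rfl⟩
    exact (h2 C hC).2 hx
  · have h5 : e.symm ⁻¹' (⋃₀ 𝒞) ∈ 𝓝 (0 : E) :=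
      e.symm.continuous.continuousAt.preimage_mem_nhds (by simpa using h3)
    refine mem_of_superset h5 ?_
    rintro x ⟨C, hC, hx⟩
    exact ⟨e '' C, ⟨C, hC, rfl⟩, e.symm x, hx, by simp⟩
  · rintro _ ⟨C, hC, rfl⟩ f hf
    rcases h4 C hC _ ⟨f, hf, rfl⟩ with h | h
    · left
      rintro _ ⟨x, hx, rfl⟩
      exact h x hx
    · right
      rintro _ ⟨x, hx, rfl⟩
      exact h x hx

/-- Choice of a regular direction. -/
theorem exists_direction {E : Type*} [NormedAddCommGroup E] [NormedSpace ℝ E] [Nontrivial E]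
    (𝓕 : Set (E → ℝ)) (hfin : 𝓕.Finite) (han : ∀ f ∈ 𝓕, AnalyticAt ℝ f 0) :
    ∃ y : E, y ≠ 0 ∧ ∀ f ∈ 𝓕, (∀ᶠ z in 𝓝 (0 : E), f z = 0) ∨
      ¬ ∀ᶠ t in 𝓝 (0 : ℝ), f (t • y) = 0 := by
  have h1 : ∀ᶠ x in 𝓝 (0 : E), ∀ f ∈ 𝓕, AnalyticAt ℝ f x :=
    (eventually_all_finite hfin).2 fun f hf => (han f hf).eventually_analyticAt
  obtain ⟨r, hr, hball⟩ := Metric.eventually_nhds_iff_ball.1 h1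
  have hpre : IsPreconnected (Metric.ball (0 : E) r) := (convex_ball (0 : E) r).isPreconnected
  have h0 : (0 : E) ∈ Metric.ball (0 : E) r := Metric.mem_ball_self hr
  have key : ∀ 𝓖 : Set (E → ℝ), 𝓖.Finite → 𝓖 ⊆ 𝓕 → ∃ V : Set E, IsOpen V ∧ V.Nonempty ∧
      V ⊆ Metric.ball 0 r ∧ ∀ f ∈ 𝓖, (∀ᶠ z in 𝓝 (0 : E), f z = 0) ∨ ∀ x ∈ V, f x ≠ 0 := by
    intro 𝓖 h𝓖
    induction 𝓖, h𝓖 using Set.Finite.induction_on with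
    | empty => exact fun _ => ⟨Metric.ball 0 r, Metric.isOpen_ball, ⟨0, h0⟩, subset_rfl, by simp⟩
    | @insert f s _ _ ih =>
      intro hsub
      obtain ⟨V, hV, hne, hVb, hVf⟩ := ih ((Set.subset_insert _ _).trans hsub)
      have hfF : f ∈ 𝓕 := hsub (Set.mem_insert _ _)
      by_cases hz : ∀ᶠ z in 𝓝 (0 : E), f z = 0
      · refine ⟨V, hV, hne, hVb, ?_⟩
        rintro g (rfl | hg)
        · exact Or.inl hz
        · exact hVf g hg
      · have hfan : AnalyticOnNhd ℝ f (Metric.ball 0 r) := fun x hx => hball x hx f hfF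
        refine ⟨V ∩ {x | f x ≠ 0}, ?_, ?_, fun x hx => hVb hx.1, ?_⟩
        · have : ContinuousOn f V := hfan.continuousOn.mono hVb
          exact this.isOpen_inter_preimage hV isOpen_ne
        · by_contra hemp
          rw [Set.not_nonempty_iff_eq_empty] at hemp
          obtain ⟨x, hx⟩ := hne
          have h2 : f =ᶠ[𝓝 x] 0 := by
            filter_upwards [hV.mem_nhds hx] with z hz
            by_contra hzz
            have : z ∈ V ∩ {x | f x ≠ 0} := ⟨hz, hzz⟩
            rw [hemp] at this
            exact this
          have h3 := hfan.eqOn_zero_of_preconnected_of_eventuallyEq_zero hpre (hVb hx) h2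
          apply hz
          filter_upwards [Metric.isOpen_ball.mem_nhds h0] with z hz
          exact h3 hz
        · rintro g (rfl | hg)
          · exact Or.inr fun x hx => hx.2
          · rcases hVf g hg with h | h
            · exact Or.inl h
            · exact Or.inr fun x hx => h x hx.1
  obtain ⟨V, hV, hne, hVb, hVf⟩ := key 𝓕 hfin subset_rfl
  obtain ⟨y, hyV, hy0⟩ : ∃ y ∈ V, y ≠ 0 := by
    by_contra hcon
    push Not at hcon
    obtain ⟨x, hx⟩ := hne
    have hx0 := hcon x hx
    subst hx0
    have h2 : (({0}ᶜ : Set E) ∩ V).Nonempty := by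
      have := Module.punctured_nhds_neBot ℝ E 0
      have h3 : ({0}ᶜ : Set E) ∩ V ∈ 𝓝[≠] (0 : E) :=
        inter_mem self_mem_nhdsWithin (mem_nhdsWithin_of_mem_nhds (hV.mem_nhds hx))
      exact Filter.nonempty_of_mem h3
    obtain ⟨y, hy, hyV⟩ := h2
    exact hy (hcon y hyV)
  refine ⟨y, hy0, fun f hf => ?_⟩
  rcases hVf f hf with h | h
  · exact Or.inl h
  · right
    intro hz
    have hseg : ∀ t ∈ Set.Icc (0 : ℝ) 1, t • y ∈ Metric.ball (0 : E) r := by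
      intro t ht
      have := hVb hyV
      simp only [mem_ball_zero_iff] at this ⊢
      rw [norm_smul, Real.norm_eq_abs, abs_of_nonneg ht.1]
      have := norm_nonneg y
      nlinarith [ht.2]
    have hgan : AnalyticOnNhd ℝ (fun t : ℝ => f (t • y)) (Set.Icc 0 1) := by
      intro t ht
      have h2 : AnalyticAt ℝ (fun t : ℝ => t • y) t :=
        (ContinuousLinearMap.toSpanSingleton ℝ y).analyticAt t
      exact AnalyticAt.comp (g := f) (f := fun t : ℝ => t • y) (x := t)
        (hball _ (hseg t ht) f hf) h2
    have h3 := hgan.eqOn_zero_of_preconnected_of_eventuallyEq_zero isPreconnected_Icc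
      (show (0 : ℝ) ∈ Set.Icc (0 : ℝ) 1 by simp) hz
    have h4 := h3 (show (1 : ℝ) ∈ Set.Icc (0 : ℝ) 1 by simp)
    simp only [one_smul, Pi.zero_apply] at h4
    exact h y hyV h4

theorem strat_all.{u} (n : ℕ) : ∀ (E : Type u) [NormedAddCommGroup E] [NormedSpace ℝ E]
    [FiniteDimensional ℝ E], Module.finrank ℝ E = n →
    ∀ 𝓕 : Set (E → ℝ), 𝓕.Finite → (∀ f ∈ 𝓕, AnalyticAt ℝ f 0) → Strat E 𝓕 := by
  induction n with
  | zero =>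
    intro E _ _ _ hE 𝓕 hfin han O hO
    have : Subsingleton E := Module.finrank_zero_iff.1 hE
    refine ⟨{Set.univ}, Set.finite_singleton _, ?_, by simp, ?_⟩
    · rintro C rfl
      refine ⟨Set.subsingleton_univ.isPreconnected, fun x _ => ?_⟩
      rw [Subsingleton.elim x 0]
      exact mem_of_mem_nhds hO
    · rintro C rfl f hf
      by_cases h : f 0 = 0
      · left; intro x _; rwa [Subsingleton.elim x 0]
      · right; intro x _; rwa [Subsingleton.elim x 0]
  | succ n ih =>
    intro E _ _ _ hE 𝓕 hfin han
    have : Nontrivial E := Module.nontrivial_of_finrank_pos (R := ℝ) (by omega)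
    obtain ⟨y, hy0, hy⟩ := exists_direction 𝓕 hfin han
    obtain ⟨E', hE'⟩ := Submodule.exists_isCompl (ℝ ∙ y)
    have hrank : Module.finrank ℝ E' = n := by
      have h1 := Submodule.finrank_add_eq_of_isCompl hE'
      rw [finrank_span_singleton hy0] at h1
      omega
    let e₀ : (E' × ℝ) ≃ₗ[ℝ] E :=
      ((LinearEquiv.refl ℝ E').prodCongr (LinearEquiv.toSpanNonzeroSingleton ℝ E y hy0)).trans
        (Submodule.prodEquivOfIsCompl E' (ℝ ∙ y) hE'.symm)
    have he₀ : ∀ x t, e₀ (x, t) = (x : E) + t • y := by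
      intro x t
      rfl
    let e : (E' × ℝ) ≃L[ℝ] E := e₀.toContinuousLinearEquiv
    have he : ∀ x t, e (x, t) = (x : E) + t • y := he₀
    refine strat_equiv e 𝓕 ?_
    refine strat_step (fun 𝓖 h1 h2 => ih E' hrank 𝓖 h1 h2) _ (hfin.image _) ?_ ?_
    · rintro _ ⟨f, hf, rfl⟩
      refine AnalyticAt.comp (g := f) (f := e) (x := 0) ?_
        ((e : (E' × ℝ) →L[ℝ] E).analyticAt 0)
      rw [map_zero]
      exact han f hf
    · rintro _ ⟨f, hf, rfl⟩
      rcases hy f hf with h | h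
      · left
        have h2 : Tendsto e (𝓝 0) (𝓝 0) := e.continuous.tendsto' _ _ (map_zero e)
        exact h2.eventually h
      · right
        simpa [he] using h

theorem loc_conn {E : Type*} [NormedAddCommGroup E] [NormedSpace ℝ E] [FiniteDimensional ℝ E]
    {ρ : E → ℝ} {p : E} (hρ : AnalyticAt ℝ ρ p) (h0 : ρ p = 0) {O : Set E} (hO : O ∈ 𝓝 p) :
    ∃ N ∈ 𝓝 p, ∀ z ∈ N, ρ z = 0 → ∃ S : Set E, (∀ w ∈ S, w ∈ O ∧ ρ w = 0) ∧ IsPreconnected S ∧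
      p ∈ S ∧ z ∈ S := by
  have htr : Tendsto (fun x : E => p + x) (𝓝 0) (𝓝 p) :=
    (continuous_const.add continuous_id).tendsto' _ _ (by simp)
  have htr' : Tendsto (fun x : E => x - p) (𝓝 p) (𝓝 0) :=
    (continuous_id.sub continuous_const).tendsto' _ _ (by simp)
  have hf : AnalyticAt ℝ (fun x => ρ (p + x)) 0 := by
    refine AnalyticAt.comp (g := ρ) (f := fun x => p + x) (x := 0) ?_
      (analyticAt_const.add analyticAt_id)
    simpa using hρ
  obtain ⟨𝒞, hfin, h1, h2, h3⟩ := strat_all _ E rfl {fun x => ρ (p + x)} (Set.finite_singleton _)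
    (by rintro f rfl; exact hf) _ (htr hO)
  have h4 : ∀ᶠ x in 𝓝 (0 : E), ∀ C ∈ 𝒞, (0 : E) ∉ closure C → x ∉ closure C := by
    refine (eventually_all_finite hfin).2 fun C _ => ?_
    by_cases h : (0 : E) ∈ closure C
    · exact Eventually.of_forall fun x hx => absurd h hx
    · filter_upwards [isClosed_closure.isOpen_compl.mem_nhds h] with x hx _
      exact hx
  refine ⟨_, htr' (inter_mem h2 h4), ?_⟩
  rintro z ⟨⟨C, hC, hzC⟩, hz⟩ hz0
  have hcl : (0 : E) ∈ closure C := by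
    by_contra h
    exact hz C hC h (subset_closure hzC)
  have hzero : ∀ x ∈ C, ρ (p + x) = 0 := by
    rcases h3 C hC _ rfl with h | h
    · exact h
    · exact absurd (by simpa using hz0) (h _ hzC)
  have hpre : IsPreconnected (insert 0 C) :=
    (h1 C hC).1.subset_closure (Set.subset_insert _ _)
      (Set.insert_subset hcl subset_closure)
  refine ⟨(fun x => p + x) '' (insert 0 C), ?_, hpre.image _ (by fun_prop), ?_, ?_⟩
  · rintro _ ⟨x, (rfl | hx), rfl⟩
    · simp only [add_zero]
      exact ⟨mem_of_mem_nhds hO, h0⟩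
    · exact ⟨(h1 C hC).2 hx, hzero x hx⟩
  · exact ⟨0, Set.mem_insert _ _, by simp⟩
  · exact ⟨z - p, Set.mem_insert_of_mem _ hzC, by simp⟩

end HX

end

end

section
open Filter Topology MeasureTheory

noncomputable section

namespace HX

/-- The Cauchy-Riemann operator. -/
def dbar (g : ℂ → ℂ) (ξ : ℂ) : ℂ :=
  (1 / 2) * (fderiv ℝ g ξ 1 + Complex.I * fderiv ℝ g ξ Complex.I)

theorem hasDerivAt_radial {g : ℂ → ℂ} (hg : Differentiable ℝ g) (w : ℂ) (s : ℝ) :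
    HasDerivAt (fun s : ℝ => g (s * w)) (fderiv ℝ g (s * w) w) s := by
  have h1 : HasDerivAt (fun s : ℝ => (s : ℂ) * w) w s := by
    simpa using (Complex.ofRealCLM.hasDerivAt (x := s)).mul_const w
  exact (hg _).hasFDerivAt.comp_hasDerivAt s h1

theorem hasDerivAt_angular {g : ℂ → ℂ} (hg : Differentiable ℝ g) (s θ : ℝ) :
    HasDerivAt (fun θ : ℝ => g (s * Complex.exp (θ * Complex.I)))
      (s * fderiv ℝ g (s * Complex.exp (θ * Complex.I)) (Complex.I * Complex.exp (θ * Complex.I))) θ := by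
  have h0 : HasDerivAt (fun θ : ℝ => (θ : ℂ) * Complex.I) Complex.I θ := by
    simpa using (Complex.ofRealCLM.hasDerivAt (x := θ)).mul_const Complex.I
  have h1 : HasDerivAt (fun θ : ℝ => (s : ℂ) * Complex.exp (θ * Complex.I))
      (s • (Complex.I * Complex.exp (θ * Complex.I))) θ := by
    have := (h0.cexp).const_mul (s : ℂ)
    have h3 : (s • (Complex.I * Complex.exp (θ * Complex.I)) : ℂ) =
        s * (Complex.exp (θ * Complex.I) * Complex.I) := by
      rw [Complex.real_smul]; ring
    rw [h3]; exact this
  have h2 := (hg (s * Complex.exp (θ * Complex.I))).hasFDerivAt.comp_hasDerivAt θ h1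
  rw [map_smul, Complex.real_smul] at h2
  exact h2

theorem pompeiu {g : ℂ → ℂ} (hg : ContDiff ℝ 1 g) (hs : HasCompactSupport g) :
    ∫ ξ, dbar g ξ / ξ = -Real.pi * g 0 := by
  have hgd : Differentiable ℝ g := hg.differentiable (by norm_num)
  have hDc : Continuous (fderiv ℝ g) := hg.continuous_fderiv (by norm_num)
  obtain ⟨M, hMpos, hM⟩ : ∃ M > 0, ∀ ξ : ℂ, M < ‖ξ‖ → fderiv ℝ g ξ = 0 ∧ g ξ = 0 := by
    obtain ⟨M, hMpos, hM⟩ := hs.isCompact.isBounded.exists_pos_norm_le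
    refine ⟨M, hMpos, fun ξ hξ => ?_⟩
    have h1 : ξ ∉ tsupport g := fun h => absurd (hM ξ h) (not_le.2 hξ)
    refine ⟨?_, image_eq_zero_of_notMem_tsupport h1⟩
    by_contra h
    exact h1 (support_fderiv_subset ℝ h)
  set e : ℝ → ℂ := fun θ => Complex.exp (θ * Complex.I) with he
  have hec : Continuous e := by simp only [he]; fun_prop
  have hen : ∀ θ, ‖e θ‖ = 1 := fun θ => Complex.norm_exp_ofReal_mul_I θ
  set A : ℝ × ℝ → ℂ := fun q => fderiv ℝ g (q.1 * e q.2) (e q.2) with hA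
  set B : ℝ × ℝ → ℂ := fun q => fderiv ℝ g (q.1 * e q.2) (Complex.I * e q.2) with hB
  have hm : Continuous (fun q : ℝ × ℝ => (q.1 : ℂ) * e q.2) := by fun_prop
  have hAc : Continuous A := (hDc.comp hm).clm_apply (hec.comp continuous_snd)
  have hBc : Continuous B := (hDc.comp hm).clm_apply (continuous_const.mul (hec.comp continuous_snd))
  have hzero : ∀ s θ : ℝ, M < s → fderiv ℝ g (s * e θ) = 0 ∧ g (s * e θ) = 0 := by
    intro s θ h
    apply hM
    rw [norm_mul, hen, mul_one, Complex.norm_real, Real.norm_eq_abs]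
    exact lt_of_lt_of_le h (le_abs_self s)
  have hIntg : ∀ D : ℝ × ℝ → ℂ, Continuous D → (∀ s θ : ℝ, M < s → D (s, θ) = 0) →
      IntegrableOn D (Set.Ioi 0 ×ˢ Set.Ioo (-Real.pi) Real.pi) (volume.prod volume) := by
    intro D hD hD0
    have h1 : IntegrableOn D (Set.Icc 0 M ×ˢ Set.Icc (-Real.pi) Real.pi) (volume.prod volume) :=
      hD.continuousOn.integrableOn_compact (isCompact_Icc.prod isCompact_Icc)
    refine IntegrableOn.of_forall_sdiff_eq_zero h1 (measurableSet_Ioi.prod measurableSet_Ioo) ?_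
    rintro ⟨s, θ⟩ ⟨⟨hs1, hθ⟩, hn⟩
    apply hD0
    by_contra hcon
    push Not at hcon
    exact hn ⟨⟨le_of_lt hs1, hcon⟩, ⟨hθ.1.le, hθ.2.le⟩⟩
  have hAi := hIntg A hAc (by intro s θ h; simp only [hA]; rw [(hzero s θ h).1]; rfl)
  have hBi := hIntg B hBc (by intro s θ h; simp only [hB]; rw [(hzero s θ h).1]; rfl)
  have hAint : ∫ q in Set.Ioi 0 ×ˢ Set.Ioo (-Real.pi) Real.pi, A q ∂(volume.prod volume) =
      -(2 * Real.pi) * g 0 := by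
    rw [← setIntegral_prod_swap, setIntegral_prod]
    · have : ∀ θ : ℝ, ∫ s in Set.Ioi (0 : ℝ), A (s, θ) = - g 0 := by
        intro θ
        have h1 := integral_Ioi_of_hasDerivAt_of_tendsto (a := 0)
          (f := fun s : ℝ => g (s * e θ)) (f' := fun s => A (s, θ)) (m := 0)
          ((hasDerivAt_radial hgd (e θ) 0).continuousAt.continuousWithinAt)
          (fun s _ => hasDerivAt_radial hgd (e θ) s) ?_ ?_
        · rw [h1]; simp
        · have h2 : IntegrableOn (fun s => A (s, θ)) (Set.Icc 0 M) :=
            (hAc.comp (by fun_prop : Continuous fun s : ℝ => (s, θ))).continuousOn.integrableOn_compact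
              isCompact_Icc
          refine IntegrableOn.of_forall_sdiff_eq_zero h2 measurableSet_Ioi ?_
          rintro s ⟨hs1, hn⟩
          have : M < s := by
            by_contra hcon
            push Not at hcon
            exact hn ⟨le_of_lt hs1, hcon⟩
          simp only [hA]
          rw [(hzero s θ this).1]; rfl
        · refine tendsto_const_nhds.congr' ?_
          filter_upwards [eventually_gt_atTop M] with s hs1
          exact ((hzero s θ hs1).2).symm
      simp only [Prod.swap_prod_mk]
      simp_rw [this]
      simp only [integral_const, MeasurableSet.univ, measureReal_restrict_apply, Set.univ_inter,
        Real.volume_real_Ioo_of_le (by linarith [Real.pi_pos] : -Real.pi ≤ Real.pi)]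
      rw [Complex.real_smul]
      push_cast
      ring
    · exact hAi.swap
  have hBint : ∫ q in Set.Ioi 0 ×ˢ Set.Ioo (-Real.pi) Real.pi, B q ∂(volume.prod volume) = 0 := by
    rw [setIntegral_prod _ hBi]
    refine setIntegral_eq_zero_of_forall_eq_zero fun s hs1 => ?_
    have hs0 : (s : ℂ) ≠ 0 := by exact_mod_cast (ne_of_gt hs1)
    have h1 : ∫ θ in (-Real.pi)..Real.pi, s * B (s, θ) =
        g (s * e Real.pi) - g (s * e (-Real.pi)) := by
      refine intervalIntegral.integral_eq_sub_of_hasDerivAt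
        (f := fun θ : ℝ => g (s * Complex.exp (θ * Complex.I))) (fun θ _ => hasDerivAt_angular hgd s θ) ?_
      refine Continuous.intervalIntegrable ?_ _ _
      exact continuous_const.mul (hBc.comp (by fun_prop : Continuous fun θ : ℝ => (s, θ)))
    have h2 : e Real.pi = e (-Real.pi) := by
      simp only [he]
      push_cast
      rw [neg_mul, Complex.exp_neg, Complex.exp_pi_mul_I]
      norm_num
    rw [h2, sub_self, intervalIntegral.integral_const_mul] at h1
    have h3 := (mul_eq_zero.1 h1).resolve_left hs0
    rw [intervalIntegral.integral_of_le (by linarith [Real.pi_pos]), integral_Ioc_eq_integral_Ioo] at h3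
    exact h3
  rw [← Complex.integral_comp_polarCoord_symm]
  have htar : polarCoord.target = Set.Ioi 0 ×ˢ Set.Ioo (-Real.pi) Real.pi := rfl
  rw [htar]
  have hcongr : ∀ q ∈ Set.Ioi (0 : ℝ) ×ˢ Set.Ioo (-Real.pi) Real.pi,
      q.1 • (dbar g (Complex.polarCoord.symm q) / Complex.polarCoord.symm q) =
        (1 / 2) * A q + (Complex.I / 2) * B q := by
    rintro ⟨s, θ⟩ ⟨hs1, -⟩
    have hs0 : (s : ℂ) ≠ 0 := by exact_mod_cast (ne_of_gt hs1)
    have h1 : Complex.polarCoord.symm (s, θ) = s * e θ := by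
      rw [Complex.polarCoord_symm_apply, he]
      simp only [Complex.exp_mul_I]
      push_cast
      rfl
    rw [h1]
    have hee : e θ = Real.cos θ + Real.sin θ * Complex.I := by
      simp only [he, Complex.exp_mul_I]
      push_cast
      rfl
    have hA' : A (s, θ) = Real.cos θ * fderiv ℝ g (s * e θ) 1 +
        Real.sin θ * fderiv ℝ g (s * e θ) Complex.I := by
      simp only [hA]
      have : e θ = Real.cos θ • (1 : ℂ) + Real.sin θ • Complex.I := by
        rw [hee]; simp
      conv_lhs => rw [show (fderiv ℝ g (s * e θ)) (e θ) = (fderiv ℝ g (s * e θ))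
        (Real.cos θ • (1 : ℂ) + Real.sin θ • Complex.I) by rw [← this]]
      rw [map_add, map_smul, map_smul, Complex.real_smul, Complex.real_smul]
    have hB' : B (s, θ) = -Real.sin θ * fderiv ℝ g (s * e θ) 1 +
        Real.cos θ * fderiv ℝ g (s * e θ) Complex.I := by
      simp only [hB]
      have : Complex.I * e θ = (-Real.sin θ) • (1 : ℂ) + Real.cos θ • Complex.I := by
        rw [hee]
        simp only [Complex.real_smul]
        push_cast
        linear_combination (Complex.sin θ) * Complex.I_mul_I
      rw [this, map_add, map_smul, map_smul, Complex.real_smul, Complex.real_smul]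
      push_cast
      rfl
    have hne : e θ ≠ 0 := by
      intro h
      have := hen θ
      rw [h] at this
      simp at this
    rw [hA', hB', dbar, Complex.real_smul]
    have hI := Complex.I_mul_I
    have hcs : (Real.cos θ : ℂ) ^ 2 + (Real.sin θ : ℂ) ^ 2 = 1 := by
      exact_mod_cast Real.cos_sq_add_sin_sq θ
    generalize fderiv ℝ g (s * e θ) 1 = a
    generalize fderiv ℝ g (s * e θ) Complex.I = b
    field_simp
    rw [hee]
    generalize (Real.cos θ : ℂ) = c at *
    generalize (Real.sin θ : ℂ) = d at *
    linear_combination (-(a + Complex.I * b)) * hcs + (d * d * a - c * d * b) * hI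
  rw [setIntegral_congr_fun (measurableSet_Ioi.prod measurableSet_Ioo) hcongr]
  have hvol : (volume : Measure (ℝ × ℝ)) = volume.prod volume := rfl
  rw [hvol, integral_add (hAi.const_mul _) (hBi.const_mul _), integral_const_mul, integral_const_mul,
    hAint, hBint]
  ring

end HX

end

end

section
open Filter Topology MeasureTheory

noncomputable section

namespace HX

theorem dbar_congr {g k : ℂ → ℂ} {ξ : ℂ} (h : g =ᶠ[𝓝 ξ] k) : dbar g ξ = dbar k ξ := by
  unfold dbar
  rw [h.fderiv_eq]

theorem dbar_const (c : ℂ) (ξ : ℂ) : dbar (fun _ => c) ξ = 0 := by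
  unfold dbar
  simp

theorem dbar_sub {g k : ℂ → ℂ} {ξ : ℂ} (hg : DifferentiableAt ℝ g ξ) (hk : DifferentiableAt ℝ k ξ) :
    dbar (fun x => g x - k x) ξ = dbar g ξ - dbar k ξ := by
  unfold dbar
  rw [fderiv_fun_sub hg hk]
  simp only [sub_apply]
  ring

theorem dbar_mul {c k : ℂ → ℂ} {ξ : ℂ} (hc : DifferentiableAt ℂ c ξ) (hk : DifferentiableAt ℝ k ξ) :
    dbar (fun x => c x * k x) ξ = c ξ * dbar k ξ := by
  have h1 : fderiv ℝ c ξ = (fderiv ℂ c ξ).restrictScalars ℝ := hc.fderiv_restrictScalars ℝ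
  have h2 : fderiv ℝ c ξ Complex.I = Complex.I * fderiv ℝ c ξ 1 := by
    rw [h1]
    simp
  unfold dbar
  rw [fderiv_fun_mul (hc.restrictScalars ℝ) hk]
  simp only [add_apply, smul_apply, smul_eq_mul]
  rw [h2]
  linear_combination (1/2 * k ξ * fderiv ℝ c ξ 1) * Complex.I_mul_I

theorem lemP {r : ℝ} (hr : 0 < r) {c κ : ℂ → ℂ} (hκ : ContDiffOn ℝ 1 κ (Metric.ball 0 r))
    (hc : ∀ ξ ∈ Metric.ball (0 : ℂ) r, AnalyticAt ℂ c ξ ∨ κ =ᶠ[𝓝 ξ] 0)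
    (h0 : ∀ ξ ∈ Metric.ball (0 : ℂ) r, r / 2 < ‖ξ‖ → κ ξ = 0) :
    ∫ ξ in Metric.ball (0 : ℂ) r, c ξ * dbar κ ξ / ξ = -Real.pi * (c 0 * κ 0) := by
  set g : ℂ → ℂ := (Metric.ball (0 : ℂ) r).indicator (fun x => c x * κ x) with hg
  have hκa : ∀ ξ ∈ Metric.ball (0 : ℂ) r, ContDiffAt ℝ 1 κ ξ := fun ξ hξ =>
    hκ.contDiffAt (Metric.isOpen_ball.mem_nhds hξ)
  have hin : ∀ ξ ∈ Metric.ball (0 : ℂ) r, g =ᶠ[𝓝 ξ] fun x => c x * κ x := by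
    intro ξ hξ
    filter_upwards [Metric.isOpen_ball.mem_nhds hξ] with x hx
    exact Set.indicator_of_mem hx _
  have hout : ∀ ξ : ℂ, r / 2 < ‖ξ‖ → g ξ = 0 := by
    intro ξ hξ
    by_cases hx : ξ ∈ Metric.ball (0 : ℂ) r
    · rw [hg, Set.indicator_of_mem hx, h0 ξ hx hξ, mul_zero]
    · rw [hg, Set.indicator_of_notMem hx]
  have hout' : ∀ ξ : ℂ, r / 2 < ‖ξ‖ → g =ᶠ[𝓝 ξ] fun _ => 0 := by
    intro ξ hξ
    filter_upwards [(isOpen_lt continuous_const continuous_norm).mem_nhds hξ] with x hx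
    exact hout x hx
  have hgs : ContDiff ℝ 1 g := by
    rw [contDiff_iff_contDiffAt]
    intro ξ
    by_cases hx : ξ ∈ Metric.ball (0 : ℂ) r
    · refine ContDiffAt.congr_of_eventuallyEq ?_ (hin ξ hx)
      rcases hc ξ hx with h | h
      · exact (h.restrictScalars (𝕜 := ℝ)).contDiffAt.mul (hκa ξ hx)
      · refine ContDiffAt.congr_of_eventuallyEq (f := fun _ => 0) contDiffAt_const ?_
        filter_upwards [h] with x hx
        simp [hx]
    · refine ContDiffAt.congr_of_eventuallyEq contDiffAt_const (hout' ξ ?_)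
      have : r ≤ ‖ξ‖ := by simpa using hx
      linarith
  have hgc : HasCompactSupport g := by
    refine HasCompactSupport.of_support_subset_isCompact (isCompact_closedBall (0 : ℂ) (r / 2)) ?_
    intro ξ hξ
    by_contra hcon
    exact hξ (hout ξ (by simpa using hcon))
  have hP := pompeiu hgs hgc
  have h00 : g 0 = c 0 * κ 0 := by
    rw [hg, Set.indicator_of_mem (by simpa using hr)]
  rw [h00] at hP
  rw [← hP, ← integral_indicator Metric.isOpen_ball.measurableSet]
  congr 1
  funext ξ
  by_cases hx : ξ ∈ Metric.ball (0 : ℂ) r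
  · rw [Set.indicator_of_mem hx, dbar_congr (hin ξ hx)]
    rcases hc ξ hx with h | h
    · rw [dbar_mul h.differentiableAt ((hκa ξ hx).differentiableAt (by norm_num))]
    · have h1 : dbar κ ξ = 0 := by
        rw [dbar_congr h]; exact dbar_const 0 ξ
      have h2 : dbar (fun x => c x * κ x) ξ = 0 := by
        rw [dbar_congr (k := fun _ => 0)]
        · exact dbar_const 0 ξ
        · filter_upwards [h] with x hx
          simp [hx]
      rw [h1, h2]; simp
  · rw [Set.indicator_of_notMem hx, dbar_congr (hout' ξ ?_), dbar_const, zero_div]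
    have : r ≤ ‖ξ‖ := by simpa using hx
    linarith

theorem inv_integrable (r : ℝ) : IntegrableOn (fun ξ : ℂ => ξ⁻¹) (Metric.closedBall (0 : ℂ) r) := by
  have h1 : IntegrableOn (fun x : ℂ => ‖x‖⁻¹) (Metric.ball (0 : ℂ) (r + 1)) := by
    rw [integrableOn_fun_norm_addHaar (μ := volume) (f := fun y : ℝ => y⁻¹)]
    rw [Complex.finrank_real_complex]
    refine IntegrableOn.congr_fun (f := fun _ => (1 : ℝ)) ?_ ?_ measurableSet_Ioo
    · exact integrableOn_const (by simp)
    · intro y hy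
      have : y ≠ 0 := ne_of_gt hy.1
      simp [this]
  have h2 := h1.mono_set (Metric.closedBall_subset_ball (by linarith : r < r + 1))
  refine h2.mono' ?_ ?_
  · exact (measurable_id.inv).aestronglyMeasurable
  · filter_upwards with x
    simp

section T
variable {E : Type*} [NormedAddCommGroup E] [NormedSpace ℂ E]

/-- the integrand without the kernel -/
def kap (χ : E → ℂ) (ψ : ℂ → E) (z : E) : ℂ → ℂ := dbar (fun ξ => χ (z + ψ ξ))

/-- The basic integral. -/
def TT (f χ : E → ℂ) (ψ : ℂ → E) (r : ℝ) (z : E) : ℂ :=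
  ∫ ξ in Metric.ball (0 : ℂ) r, f (z + ψ ξ) * kap χ ψ z ξ / ξ

variable {f χ χ' : E → ℂ} {ψ : ℂ → E} {r : ℝ} {z : E}

theorem psi_contDiff (hψ : DifferentiableOn ℂ ψ (Metric.ball 0 1)) [CompleteSpace E] {ξ : ℂ}
    (hξ : ξ ∈ Metric.ball (0 : ℂ) 1) : ContDiffAt ℝ 1 ψ ξ := by
  have := hψ.analyticAt (Metric.isOpen_ball.mem_nhds hξ)
  exact (this.restrictScalars (𝕜 := ℝ)).contDiffAt

theorem kappa_contDiff (hψ : DifferentiableOn ℂ ψ (Metric.ball 0 1)) [CompleteSpace E]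
    (hχ : ContDiff ℝ 1 χ) (z : E) {ξ : ℂ}
    (hξ : ξ ∈ Metric.ball (0 : ℂ) 1) : ContDiffAt ℝ 1 (fun ξ => χ (z + ψ ξ)) ξ :=
  hχ.contDiffAt.comp ξ (contDiffAt_const.add (psi_contDiff hψ hξ))

theorem kap_continuousAt (hψ : DifferentiableOn ℂ ψ (Metric.ball 0 1)) [CompleteSpace E]
    (hχ : ContDiff ℝ 1 χ) (z : E) {ξ : ℂ}
    (hξ : ξ ∈ Metric.ball (0 : ℂ) 1) : ContinuousAt (kap χ ψ z) ξ := by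
  have h := (kappa_contDiff hψ hχ z hξ).continuousAt_fderiv (by norm_num)
  unfold kap
  unfold dbar
  exact continuousAt_const.mul ((h.clm_apply continuousAt_const).add
    (continuousAt_const.mul (h.clm_apply continuousAt_const)))

theorem psi_continuousAt (hψ : DifferentiableOn ℂ ψ (Metric.ball 0 1)) {ξ : ℂ}
    (hξ : ξ ∈ Metric.ball (0 : ℂ) 1) : ContinuousAt ψ ξ :=
  (hψ.differentiableAt (Metric.isOpen_ball.mem_nhds hξ)).continuousAt

theorem u_tendsto (hψ : DifferentiableOn ℂ ψ (Metric.ball 0 1)) (z : E) {ξ : ℂ}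
    (hξ : ξ ∈ Metric.ball (0 : ℂ) 1) : Tendsto (fun ξ => z + ψ ξ) (𝓝 ξ) (𝓝 (z + ψ ξ)) :=
  tendsto_const_nhds.add (psi_continuousAt hψ hξ)

theorem kap_eq_zero (hψ : DifferentiableOn ℂ ψ (Metric.ball 0 1)) {ξ : ℂ}
    (hξ : ξ ∈ Metric.ball (0 : ℂ) 1) {c : ℂ} (h : χ =ᶠ[𝓝 (z + ψ ξ)] fun _ => c) :
    kap χ ψ z ξ = 0 := by
  unfold kap
  rw [dbar_congr (k := fun _ => c), dbar_const]
  exact (u_tendsto hψ z hξ).eventually h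

theorem TT_integrable [CompleteSpace E] (hψ : DifferentiableOn ℂ ψ (Metric.ball 0 1))
    (hr1 : r < 1)
    (hχ : ContDiff ℝ 1 χ)
    (hc : ∀ ξ ∈ Metric.closedBall (0 : ℂ) r, (∀ᶠ v in 𝓝 (z + ψ ξ), DifferentiableAt ℂ f v) ∨
      ∃ c : ℂ, χ =ᶠ[𝓝 (z + ψ ξ)] fun _ => c) :
    IntegrableOn (fun ξ => f (z + ψ ξ) * kap χ ψ z ξ / ξ) (Metric.ball (0 : ℂ) r) := by
  have hsub : Metric.closedBall (0 : ℂ) r ⊆ Metric.ball 0 1 := Metric.closedBall_subset_ball hr1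
  have hcont : ContinuousOn (fun ξ => f (z + ψ ξ) * kap χ ψ z ξ) (Metric.closedBall 0 r) := by
    intro ξ hξ
    refine ContinuousAt.continuousWithinAt ?_
    rcases hc ξ hξ with h | ⟨c, h⟩
    · refine ContinuousAt.mul ?_ (kap_continuousAt hψ hχ z (hsub hξ))
      exact ContinuousAt.comp (f := fun ξ => z + ψ ξ) (g := f) h.self_of_nhds.continuousAt
        (u_tendsto hψ z (hsub hξ))
    · have h1 : ∀ᶠ x in 𝓝 ξ, f (z + ψ x) * kap χ ψ z x = 0 := by
        filter_upwards [(u_tendsto hψ z (hsub hξ)).eventually h.eventually_nhds,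
          Metric.isOpen_ball.mem_nhds (hsub hξ)] with x hx hx1
        rw [kap_eq_zero hψ hx1 hx, mul_zero]
      exact (continuousAt_const (y := (0:ℂ))).congr (by filter_upwards [h1] with x hx; exact hx.symm)
  have := (inv_integrable r).continuousOn_mul hcont (isCompact_closedBall _ _)
  exact this.mono_set Metric.ball_subset_closedBall

theorem TT_sub [CompleteSpace E] (hψ : DifferentiableOn ℂ ψ (Metric.ball 0 1))
    (hr1 : r < 1)
    (hχ : ContDiff ℝ 1 χ) (hχ' : ContDiff ℝ 1 χ')
    (hc : ∀ ξ ∈ Metric.closedBall (0 : ℂ) r, (∀ᶠ v in 𝓝 (z + ψ ξ), DifferentiableAt ℂ f v) ∨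
      ∃ c : ℂ, χ =ᶠ[𝓝 (z + ψ ξ)] fun _ => c)
    (hc' : ∀ ξ ∈ Metric.closedBall (0 : ℂ) r, (∀ᶠ v in 𝓝 (z + ψ ξ), DifferentiableAt ℂ f v) ∨
      ∃ c : ℂ, χ' =ᶠ[𝓝 (z + ψ ξ)] fun _ => c) :
    TT f (fun u => χ u - χ' u) ψ r z = TT f χ ψ r z - TT f χ' ψ r z := by
  have hsub : Metric.ball (0 : ℂ) r ⊆ Metric.ball 0 1 := Metric.ball_subset_ball hr1.le
  unfold TT
  rw [← integral_sub (TT_integrable hψ hr1 hχ hc) (TT_integrable hψ hr1 hχ' hc')]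
  refine setIntegral_congr_fun Metric.isOpen_ball.measurableSet fun ξ hξ => ?_
  have : kap (fun u => χ u - χ' u) ψ z ξ = kap χ ψ z ξ - kap χ' ψ z ξ := by
    unfold kap
    exact dbar_sub ((kappa_contDiff hψ hχ z (hsub hξ)).differentiableAt (by norm_num))
      ((kappa_contDiff hψ hχ' z (hsub hξ)).differentiableAt (by norm_num))
  simp only [this]
  ring

theorem TT_eval [CompleteSpace E] (hψ : DifferentiableOn ℂ ψ (Metric.ball 0 1)) (hψ0 : ψ 0 = 0)
    (hr : 0 < r) (hr1 : r < 1)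
    (hχ : ContDiff ℝ 1 χ)
    (hc : ∀ ξ ∈ Metric.closedBall (0 : ℂ) r, (∀ᶠ v in 𝓝 (z + ψ ξ), DifferentiableAt ℂ f v) ∨
      χ =ᶠ[𝓝 (z + ψ ξ)] fun _ => 0)
    (h0 : ∀ ξ ∈ Metric.ball (0 : ℂ) r, r / 2 < ‖ξ‖ → χ (z + ψ ξ) = 0) :
    TT f χ ψ r z = -Real.pi * (f z * χ z) := by
  have hsub : Metric.ball (0 : ℂ) r ⊆ Metric.ball 0 1 := Metric.ball_subset_ball hr1.le
  have := lemP hr (c := fun ξ => f (z + ψ ξ)) (κ := fun ξ => χ (z + ψ ξ))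
    (fun ξ hξ => (kappa_contDiff hψ hχ z (hsub hξ)).contDiffWithinAt) ?_ h0
  · simpa [TT, kap, hψ0] using this
  · intro ξ hξ
    rcases hc ξ (Metric.ball_subset_closedBall hξ) with h | h
    · left
      rw [Complex.analyticAt_iff_eventually_differentiableAt]
      filter_upwards [(u_tendsto hψ z (hsub hξ)).eventually h,
        Metric.isOpen_ball.mem_nhds (hsub hξ)] with x hx hx1
      exact DifferentiableAt.comp (f := fun ξ => z + ψ ξ) (g := f) x hx
        ((hψ.differentiableAt (Metric.isOpen_ball.mem_nhds hx1)).const_add z)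
    · right
      exact (u_tendsto hψ z (hsub hξ)).eventually h

theorem cauchy_fd {v : E} {δ M : ℝ} (hδ : 0 < δ)
    (h : ∀ w, ‖w - v‖ ≤ δ → DifferentiableAt ℂ f w ∧ ‖f w‖ ≤ M) : ‖fderiv ℂ f v‖ ≤ M / δ := by
  have hM : 0 ≤ M := (norm_nonneg _).trans (h v (by simp [hδ.le])).2
  refine ContinuousLinearMap.opNorm_le_bound _ (by positivity) fun e => ?_
  by_cases he : e = 0
  · simp [he]
  have hen : 0 < ‖e‖ := norm_pos_iff.2 he
  have hmem : ∀ t : ℂ, ‖t‖ ≤ δ / ‖e‖ → ‖(v + t • e) - v‖ ≤ δ := by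
    intro t ht
    rw [add_sub_cancel_left, norm_smul]
    exact (le_div_iff₀ hen).1 ht
  have hd : ∀ t : ℂ, ‖t‖ ≤ δ / ‖e‖ →
      HasDerivAt (fun t : ℂ => f (v + t • e)) (fderiv ℂ f (v + t • e) e) t := by
    intro t ht
    have h1 : HasDerivAt (fun t : ℂ => v + t • e) e t := by
      simpa using ((hasDerivAt_id t).smul_const e).const_add v
    exact (h _ (hmem t ht)).1.hasFDerivAt.comp_hasDerivAt t h1
  have hcl : ∀ t ∈ closure (Metric.ball (0 : ℂ) (δ / ‖e‖)), ‖t‖ ≤ δ / ‖e‖ := by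
    intro t ht
    simpa using Metric.closure_ball_subset_closedBall ht
  have key := Complex.norm_deriv_le_of_forall_mem_sphere_norm_le (c := 0) (R := δ / ‖e‖) (C := M)
    (f := fun t : ℂ => f (v + t • e)) (by positivity) ?_ ?_
  · rw [(hd 0 (by simp; positivity)).deriv] at key
    simp only [zero_smul, add_zero] at key
    refine key.trans (le_of_eq ?_)
    field_simp
  · refine DifferentiableOn.diffContOnCl fun t ht => ?_
    exact (hd t (hcl t ht)).differentiableAt.differentiableWithinAt
  · intro t ht
    exact (h _ (hmem t (by simpa using (le_of_eq ht)))).2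

theorem diff_int [FiniteDimensional ℂ E] [MeasurableSpace E] [BorelSpace E] (hf : Measurable f)
    {k : ℂ → ℂ} (hk : ContinuousOn k (Metric.closedBall 0 r))
    (hψ : ContinuousOn ψ (Metric.closedBall 0 r)) {δ M : ℝ} (hδ : 0 < δ)
    (hK : ∀ ξ ∈ Metric.ball (0 : ℂ) r, k ξ ≠ 0 → ∀ w, ‖w - (z + ψ ξ)‖ ≤ 2 * δ →
      DifferentiableAt ℂ f w ∧ ‖f w‖ ≤ M) :
    DifferentiableAt ℂ (fun h => ∫ ξ in Metric.ball (0 : ℂ) r, f (z + h + ψ ξ) * k ξ / ξ) 0 := by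
  have : SecondCountableTopology E := by
    have : ProperSpace E := FiniteDimensional.proper ℂ E
    infer_instance
  have hkb : ContinuousOn k (Metric.ball 0 r) := hk.mono Metric.ball_subset_closedBall
  have hψb : ContinuousOn ψ (Metric.ball 0 r) := hψ.mono Metric.ball_subset_closedBall
  have hbm : MeasurableSet (Metric.ball (0 : ℂ) r) := Metric.isOpen_ball.measurableSet
  have hkm : AEMeasurable k (volume.restrict (Metric.ball 0 r)) := hkb.aemeasurable hbm
  have hψm : AEMeasurable ψ (volume.restrict (Metric.ball 0 r)) := hψb.aemeasurable hbm
  have hki : IntegrableOn (fun ξ => k ξ * ξ⁻¹) (Metric.ball (0 : ℂ) r) :=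
    ((inv_integrable r).continuousOn_mul hk (isCompact_closedBall _ _)).mono_set
      Metric.ball_subset_closedBall
  have hFm : ∀ h, AEStronglyMeasurable (fun ξ => f (z + h + ψ ξ) * k ξ / ξ)
      (volume.restrict (Metric.ball 0 r)) := by
    intro h
    refine AEMeasurable.aestronglyMeasurable ?_
    exact ((hf.comp_aemeasurable (hψm.const_add _)).mul hkm).div measurable_id.aemeasurable
  have hmem : ∀ ξ ∈ Metric.ball (0 : ℂ) r, k ξ ≠ 0 → ∀ h ∈ Metric.ball (0 : E) δ,
      ∀ w, ‖w - (z + h + ψ ξ)‖ ≤ δ → DifferentiableAt ℂ f w ∧ ‖f w‖ ≤ M := by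
    intro ξ hξ hk0 h hh w hw
    apply hK ξ hξ hk0
    have : ‖h‖ < δ := by simpa using hh
    calc ‖w - (z + ψ ξ)‖ = ‖(w - (z + h + ψ ξ)) + h‖ := by congr 1; abel
      _ ≤ _ := (norm_add_le _ _).trans (by linarith)
  have := hasFDerivAt_integral_of_dominated_of_fderiv_le (𝕜 := ℂ)
    (μ := volume.restrict (Metric.ball (0 : ℂ) r)) (x₀ := (0 : E)) (s := Metric.ball 0 δ)
    (F := fun h ξ => f (z + h + ψ ξ) * k ξ / ξ)
    (F' := fun h ξ => (k ξ * ξ⁻¹) • fderiv ℂ f (z + h + ψ ξ))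
    (bound := fun ξ => ‖k ξ * ξ⁻¹‖ * (M / δ))
    (Metric.ball_mem_nhds _ hδ) (Eventually.of_forall hFm) ?_ ?_ ?_ (hki.norm.mul_const _) ?_
  · exact this.differentiableAt
  · refine Integrable.mono' (hki.norm.mul_const M) (hFm 0) ?_
    refine (ae_restrict_iff' hbm).2 (Eventually.of_forall fun ξ hξ => ?_)
    by_cases hk0 : k ξ = 0
    · simp [hk0]
    · have := (hmem ξ hξ hk0 0 (by simpa using hδ) (z + 0 + ψ ξ) (by simpa using hδ.le)).2
      rw [div_eq_mul_inv, mul_assoc, norm_mul, mul_comm]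
      gcongr
  · have h1 : Measurable (fderiv ℂ f) := measurable_fderiv ℂ f
    have h2 : AEMeasurable (fun ξ => fderiv ℂ f (z + 0 + ψ ξ)) (volume.restrict (Metric.ball 0 r)) :=
      h1.comp_aemeasurable (hψm.const_add _)
    have : FiniteDimensional ℂ (E →L[ℂ] ℂ) := inferInstance
    have : ProperSpace (E →L[ℂ] ℂ) := FiniteDimensional.proper ℂ _
    have h3 : AEStronglyMeasurable (fun ξ => fderiv ℂ f (z + 0 + ψ ξ))
      (volume.restrict (Metric.ball 0 r)) := h2.aestronglyMeasurable
    exact hki.aestronglyMeasurable.smul h3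
  · refine (ae_restrict_iff' hbm).2 (Eventually.of_forall fun ξ hξ h hh => ?_)
    by_cases hk0 : k ξ = 0
    · simp [hk0]
    · rw [norm_smul]
      gcongr
      exact cauchy_fd hδ (hmem ξ hξ hk0 h hh)
  · refine (ae_restrict_iff' hbm).2 (Eventually.of_forall fun ξ hξ h hh => ?_)
    by_cases hk0 : k ξ = 0
    · show HasFDerivAt (fun h => f (z + h + ψ ξ) * k ξ / ξ)
        ((k ξ * ξ⁻¹) • fderiv ℂ f (z + h + ψ ξ)) h
      rw [hk0, zero_mul]
      refine ((hasFDerivAt_const (0 : ℂ) h).congr_fderiv ?_).congr_of_eventuallyEq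
        (Eventually.of_forall fun x => by simp)
      ext x
      simp
    · have h1 := (hmem ξ hξ hk0 h hh (z + h + ψ ξ) (by simpa using hδ.le)).1
      have h2 : HasFDerivAt (fun h => z + h + ψ ξ) (ContinuousLinearMap.id ℂ E) h :=
        ((hasFDerivAt_id h).const_add z).add_const _
      have h3 := (h1.hasFDerivAt.comp h h2).mul_const (k ξ * ξ⁻¹)
      simp only [ContinuousLinearMap.comp_id] at h3
      refine h3.congr_of_eventuallyEq (Eventually.of_forall fun x => ?_)
      simp only [Function.comp]
      ring

end T

end HX

end

end

section
open Filter Topology MeasureTheory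

noncomputable section

namespace HX

section core
variable {E : Type*} [NormedAddCommGroup E] [NormedSpace ℂ E]

/-- One of the two translated support discs. -/
structure Side (p : E) (R t ε : ℝ) (d : E → ℝ) (ψ : ℂ → E) (r : ℝ) : Prop where
  diff : DifferentiableOn ℂ ψ (Metric.ball 0 1)
  zero : ψ 0 = 0
  rpos : 0 < r
  rlt : r < 1
  mem : ∀ ξ ∈ Metric.closedBall (0 : ℂ) r, ∀ z ∈ Metric.ball p ε,
    z + ψ ξ ∈ Metric.ball p (3 * R / 4)
  ann : ∀ ξ ∈ Metric.ball (0 : ℂ) r, r / 2 < ‖ξ‖ → ∀ z ∈ Metric.ball p ε, 3 * t ≤ d (z + ψ ξ)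

/-- Hypotheses on the function, the cutoff, and the gauge. -/
structure Cut (p : E) (R t : ℝ) (d : E → ℝ) (f χ : E → ℂ) (M : ℝ) : Prop where
  tpos : 0 < t
  tR : t ≤ R / 8
  lip : ∀ u v, d u ≤ d v + ‖u - v‖
  cont : Continuous d
  fd : ∀ u, d u < 3 * t → DifferentiableAt ℂ f u
  bd : ∀ u, d u ≤ 2 * t → ‖f u‖ ≤ M
  smooth : ContDiff ℝ 1 χ
  loc : ∀ u ∈ Metric.ball p (7 * R / 8), t < d u → ∃ c : ℂ, χ =ᶠ[𝓝 u] fun _ => c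
  shift : ∀ u ∈ Metric.ball p (3 * R / 4), 2 * t < d u → ∀ h, ‖h‖ < t → χ (u - h) = χ u

variable {p : E} {R t ε : ℝ} {d : E → ℝ} {f χ : E → ℂ} {M : ℝ} {ψ ψ₁ ψ₂ : ℂ → E} {r r₁ r₂ : ℝ}

theorem Cut.fd' (hC : Cut p R t d f χ M) {u : E} (hu : d u < 3 * t) :
    ∀ᶠ v in 𝓝 u, DifferentiableAt ℂ f v := by
  filter_upwards [(isOpen_lt hC.cont continuous_const).mem_nhds hu] with v hv
  exact hC.fd v hv

theorem side_shift [CompleteSpace E] (hC : Cut p R t d f χ M) (hS : Side p R t ε d ψ r)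
    {z h : E} (hz : z ∈ Metric.ball p ε) (hh : ‖h‖ < t) :
    TT f χ ψ r z - TT f (fun u => χ (u - h)) ψ r z = -Real.pi * (f z * (χ z - χ (z - h))) := by
  have ht := hC.tpos
  have hR : 0 < R := by linarith [hC.tR]
  have hsm : ContDiff ℝ 1 (fun u => χ (u - h)) := hC.smooth.comp (contDiff_id.sub contDiff_const)
  have hdist : ∀ u, d u ≤ d (u - h) + ‖h‖ := fun u => by simpa using hC.lip u (u - h)
  rw [← TT_sub hS.diff hS.rlt hC.smooth hsm, TT_eval hS.diff hS.zero hS.rpos hS.rlt (hC.smooth.sub hsm)]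
  · intro ξ hξ
    rcases lt_or_ge (d (z + ψ ξ)) (3 * t) with h1 | h1
    · exact Or.inl (hC.fd' h1)
    · right
      have h2 : ∀ᶠ u in 𝓝 (z + ψ ξ), 2 * t < d u :=
        (isOpen_lt continuous_const hC.cont).mem_nhds (by show 2 * t < _; linarith)
      filter_upwards [h2, Metric.isOpen_ball.mem_nhds (hS.mem ξ hξ z hz)] with u hu hu1
      rw [hC.shift u hu1 hu h hh, sub_self]
  · intro ξ hξ hξ2
    have h1 := hS.ann ξ hξ hξ2 z hz
    rw [hC.shift _ (hS.mem ξ (Metric.ball_subset_closedBall hξ) z hz) (by linarith) h hh, sub_self]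
  · intro ξ hξ
    rcases lt_or_ge (d (z + ψ ξ)) (3 * t) with h1 | h1
    · exact Or.inl (hC.fd' h1)
    · right
      refine hC.loc _ (Metric.ball_subset_ball (by linarith) (hS.mem ξ hξ z hz)) (by linarith)
  · intro ξ hξ
    rcases lt_or_ge (d (z + ψ ξ)) (3 * t) with h1 | h1
    · exact Or.inl (hC.fd' h1)
    · right
      obtain ⟨c, hc⟩ := hC.loc (z + ψ ξ - h) (by
        have := hS.mem ξ hξ z hz
        rw [Metric.mem_ball, dist_eq_norm] at this ⊢
        calc ‖z + ψ ξ - h - p‖ = ‖(z + ψ ξ - p) - h‖ := by congr 1; abel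
          _ ≤ _ := norm_sub_le _ _
          _ < _ := by linarith [hC.tR]) (by linarith [hdist (z + ψ ξ)])
      refine ⟨c, ?_⟩
      have : Tendsto (fun u => u - h) (𝓝 (z + ψ ξ)) (𝓝 (z + ψ ξ - h)) :=
        tendsto_id.sub tendsto_const_nhds
      exact this.eventually hc

theorem side_diff [FiniteDimensional ℂ E] [MeasurableSpace E] [BorelSpace E]
    (hf : Measurable f) (hC : Cut p R t d f χ M) (hS : Side p R t ε d ψ r)
    {z : E} (hz : z ∈ Metric.ball p ε) :
    DifferentiableAt ℂ (fun h => TT f (fun u => χ (u - h)) ψ r (z + h)) 0 := by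
  have : CompleteSpace E := FiniteDimensional.complete ℂ E
  have ht := hC.tpos
  have hR : 0 < R := by linarith [hC.tR]
  have hsub : Metric.closedBall (0 : ℂ) r ⊆ Metric.ball 0 1 := Metric.closedBall_subset_ball hS.rlt
  have heq : (fun h => TT f (fun u => χ (u - h)) ψ r (z + h)) =
      fun h => ∫ ξ in Metric.ball (0 : ℂ) r, f (z + h + ψ ξ) * kap χ ψ z ξ / ξ := by
    funext h
    have : kap (fun u => χ (u - h)) ψ (z + h) = kap χ ψ z := by
      unfold kap
      have h1 : ∀ ξ, z + h + ψ ξ - h = z + ψ ξ := fun ξ => by abel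
      simp only [h1]
    unfold TT
    rw [this]
  rw [heq]
  refine diff_int hf (fun ξ hξ => (kap_continuousAt hS.diff hC.smooth z (hsub hξ)).continuousWithinAt)
    (fun ξ hξ => (psi_continuousAt hS.diff (hsub hξ)).continuousWithinAt) (δ := t / 2) (M := M)
    (by linarith) ?_
  intro ξ hξ hk w hw
  have hξ' := Metric.ball_subset_closedBall hξ
  have h1 : d (z + ψ ξ) ≤ t := by
    by_contra hcon
    push Not at hcon
    obtain ⟨c, hc⟩ := hC.loc _ (Metric.ball_subset_ball (by linarith) (hS.mem ξ hξ' z hz)) hcon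
    exact hk (kap_eq_zero hS.diff (hsub hξ') hc)
  have h2 := hC.lip w (z + ψ ξ)
  exact ⟨hC.fd w (by linarith), hC.bd w (by linarith)⟩

/-- The extension. -/
def FF (f χ : E → ℂ) (ψ₁ ψ₂ : ℂ → E) (r₁ r₂ : ℝ) (z : E) : ℂ :=
  -(1 / (Real.pi : ℂ)) * (TT f χ ψ₂ r₂ z - TT f χ ψ₁ r₁ z)

theorem FF_diff [FiniteDimensional ℂ E] [MeasurableSpace E] [BorelSpace E]
    (hf : Measurable f) (hC : Cut p R t d f χ M) (hS₁ : Side p R t ε d ψ₁ r₁)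
    (hS₂ : Side p R t ε d ψ₂ r₂) {z : E} (hz : z ∈ Metric.ball p ε) :
    DifferentiableAt ℂ (FF f χ ψ₁ ψ₂ r₁ r₂) z := by
  have : CompleteSpace E := FiniteDimensional.complete ℂ E
  have hD : DifferentiableAt ℂ (fun h => -(1 / (Real.pi : ℂ)) *
      (TT f (fun u => χ (u - h)) ψ₂ r₂ (z + h) - TT f (fun u => χ (u - h)) ψ₁ r₁ (z + h))) 0 :=
    ((side_diff hf hC hS₂ hz).sub (side_diff hf hC hS₁ hz)).const_mul _
  have hev : (fun h => FF f χ ψ₁ ψ₂ r₁ r₂ (z + h)) =ᶠ[𝓝 0] fun h => -(1 / (Real.pi : ℂ)) *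
      (TT f (fun u => χ (u - h)) ψ₂ r₂ (z + h) - TT f (fun u => χ (u - h)) ψ₁ r₁ (z + h)) := by
    have h1 : ∀ᶠ h in 𝓝 (0 : E), z + h ∈ Metric.ball p ε := by
      have : Tendsto (fun h => z + h) (𝓝 (0 : E)) (𝓝 (z + 0)) := tendsto_const_nhds.add tendsto_id
      rw [add_zero] at this
      exact this.eventually (Metric.isOpen_ball.mem_nhds hz)
    filter_upwards [h1, Metric.ball_mem_nhds (0 : E) hC.tpos] with h hh hh2
    have hh3 : ‖h‖ < t := by simpa using hh2
    have e1 := side_shift hC hS₁ hh hh3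
    have e2 := side_shift hC hS₂ hh hh3
    unfold FF
    linear_combination (-(1 / (Real.pi : ℂ))) * (e2 - e1)
  have h3 := hD.congr_of_eventuallyEq hev
  have h4 : FF f χ ψ₁ ψ₂ r₁ r₂ = (fun h => FF f χ ψ₁ ψ₂ r₁ r₂ (z + h)) ∘ fun w => w - z := by
    funext w
    simp
  rw [h4]
  refine DifferentiableAt.comp z ?_ (differentiableAt_id.sub_const z)
  simpa using h3

theorem FF_eq [CompleteSpace E]
    (hC : Cut p R t d f χ M) (hS₁ : Side p R t ε d ψ₁ r₁)
    (hS₂ : Side p R t ε d ψ₂ r₂) {z : E} (hz : z ∈ Metric.ball p ε)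
    (h₁ : ∀ ξ ∈ Metric.closedBall (0 : ℂ) r₁, 2 * t < d (z + ψ₁ ξ) → χ =ᶠ[𝓝 (z + ψ₁ ξ)] fun _ => 1)
    (h₂ : ∀ ξ ∈ Metric.closedBall (0 : ℂ) r₂, 2 * t < d (z + ψ₂ ξ) → χ =ᶠ[𝓝 (z + ψ₂ ξ)] fun _ => 0) :
    FF f χ ψ₁ ψ₂ r₁ r₂ z = f z := by
  have ht := hC.tpos
  have e2 : TT f χ ψ₂ r₂ z = -Real.pi * (f z * χ z) := by
    refine TT_eval hS₂.diff hS₂.zero hS₂.rpos hS₂.rlt hC.smooth ?_ ?_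
    · intro ξ hξ
      rcases lt_or_ge (d (z + ψ₂ ξ)) (3 * t) with h1 | h1
      · exact Or.inl (hC.fd' h1)
      · exact Or.inr (h₂ ξ hξ (by linarith))
    · intro ξ hξ hξ2
      have h1 := hS₂.ann ξ hξ hξ2 z hz
      exact (h₂ ξ (Metric.ball_subset_closedBall hξ) (by linarith)).self_of_nhds
  have e1 : TT f (fun u => χ u - 1) ψ₁ r₁ z = -Real.pi * (f z * (χ z - 1)) := by
    refine TT_eval hS₁.diff hS₁.zero hS₁.rpos hS₁.rlt (hC.smooth.sub contDiff_const) ?_ ?_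
    · intro ξ hξ
      rcases lt_or_ge (d (z + ψ₁ ξ)) (3 * t) with h1 | h1
      · exact Or.inl (hC.fd' h1)
      · right
        filter_upwards [h₁ ξ hξ (by linarith)] with u hu
        rw [hu, sub_self]
    · intro ξ hξ hξ2
      have h1 := hS₁.ann ξ hξ hξ2 z hz
      rw [(h₁ ξ (Metric.ball_subset_closedBall hξ) (by linarith)).self_of_nhds, sub_self]
  have e3 : TT f (fun u => χ u - 1) ψ₁ r₁ z = TT f χ ψ₁ r₁ z := by
    unfold TT
    refine setIntegral_congr_fun Metric.isOpen_ball.measurableSet fun ξ hξ => ?_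
    have : kap (fun u => χ u - 1) ψ₁ z ξ = kap χ ψ₁ z ξ := by
      unfold kap dbar
      simp only [fderiv_sub_const]
    simp only [this]
  have hpi : (Real.pi : ℂ) ≠ 0 := by exact_mod_cast Real.pi_ne_zero
  unfold FF
  rw [← e3, e1, e2]
  field_simp
  ring

end core

end HX

end

end

section
open Filter Topology MeasureTheory

noncomputable section

namespace HX

section geo
variable {E : Type*} [NormedAddCommGroup E] [NormedSpace ℂ E]

theorem ident {G : E → ℂ} {D S : Set E} (hD : IsOpen D) (hG : DifferentiableOn ℂ G D)
    (hS : IsPreconnected S) (hSD : S ⊆ D) {p : E} (hp : p ∈ S) (h0 : ∀ᶠ z in 𝓝 p, G z = 0) :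
    ∀ z ∈ S, G z = 0 := by
  set A : Set E := {z | ∀ᶠ w in 𝓝 z, G w = 0} with hA
  have hAo : IsOpen A := isOpen_iff_mem_nhds.2 fun z hz => eventually_eventually_nhds.2 hz
  have key : ∀ z δ, Metric.ball z δ ⊆ D → ∀ a ∈ A, a ∈ Metric.ball z δ →
      ∀ w ∈ Metric.ball z δ, G w = 0 := by
    intro z δ hzδ a ha haz w hw
    set l : ℂ → E := fun t => a + t • (w - a) with hl
    have hld : Differentiable ℂ l := by
      intro t
      exact ((differentiableAt_id).smul_const (w - a)).const_add a
    set P : Set ℂ := l ⁻¹' Metric.ball z δ with hP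
    have hPo : IsOpen P := Metric.isOpen_ball.preimage hld.continuous
    have hPc : Convex ℝ P := by
      intro x hx y hy s t hs ht hst
      have h1 : l (s • x + t • y) = s • l x + t • l y := by
        simp only [hl]
        have h2 : a = s • a + t • a := by rw [← add_smul, hst, one_smul]
        nth_rewrite 1 [h2]
        rw [add_smul, smul_add, smul_add, smul_assoc, smul_assoc]
        abel
      show l (s • x + t • y) ∈ Metric.ball z δ
      rw [h1]
      exact convex_ball z δ hx hy hs ht hst
    have han : AnalyticOnNhd ℂ (G ∘ l) P := by
      refine DifferentiableOn.analyticOnNhd ?_ hPo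
      exact hG.comp hld.differentiableOn fun t ht => hzδ ht
    have h00 : (0 : ℂ) ∈ P := by simpa [hP, hl] using haz
    have h11 : (1 : ℂ) ∈ P := by simpa [hP, hl] using hw
    have hz : (G ∘ l) =ᶠ[𝓝 0] 0 := by
      have : Tendsto l (𝓝 0) (𝓝 a) := by
        have := hld.continuous.tendsto 0
        simpa [hl] using this
      exact this.eventually ha
    have := han.eqOn_zero_of_preconnected_of_eventuallyEq_zero hPc.isPreconnected h00 hz h11
    simpa [hl] using this
  have hBo : IsOpen (D \ A) := by
    rw [Metric.isOpen_iff]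
    rintro z ⟨hzD, hzA⟩
    obtain ⟨δ, hδ, hb⟩ := Metric.isOpen_iff.1 hD z hzD
    refine ⟨δ, hδ, fun a ha => ⟨hb ha, fun haA => hzA ?_⟩⟩
    filter_upwards [Metric.ball_mem_nhds z hδ] with w hw
    exact key z δ hb a haA ha w hw
  have := IsPreconnected.subset_left_of_subset_union hAo hBo Set.disjoint_sdiff_right
    (fun z hz => by
      by_cases h : z ∈ A
      · exact Or.inl h
      · exact Or.inr ⟨hSD hz, h⟩) ⟨p, hp, h0⟩ hS
  intro z hz
  exact (this hz).self_of_nhds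

theorem curve_setup [CompleteSpace E] {H V Hc : Set E} {p : E} {R : ℝ} (hR : 0 < R)
    (hHc : Hc = H ∩ Metric.closedBall p R) (hcl : IsClosed Hc) (hp : p ∈ Hc) {φ : ℂ → E}
    (hφ : DifferentiableOn ℂ φ (Metric.ball 0 1)) (hφ0 : φ 0 = p)
    (hnc : ∃ a ∈ Metric.ball (0 : ℂ) 1, ∃ b ∈ Metric.ball (0 : ℂ) 1, φ a ≠ φ b)
    (hφH : ∀ ξ ∈ Metric.ball (0 : ℂ) 1, φ ξ ∈ H → φ ξ = p)
    (hφV : ∀ ξ ∈ Metric.ball (0 : ℂ) 1, φ ξ ≠ p → φ ξ ∈ V) :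
    ∃ r η : ℝ, 0 < r ∧ r < 1 ∧ 0 < η ∧ (∀ ξ ∈ Metric.closedBall (0 : ℂ) r, ‖φ ξ - p‖ < R / 2) ∧
      (∀ ξ ∈ Metric.closedBall (0 : ℂ) r, ξ ≠ 0 → φ ξ ∈ V) ∧
      (∀ ξ ∈ Metric.closedBall (0 : ℂ) r, r / 2 ≤ ‖ξ‖ → 2 * η ≤ Metric.infDist (φ ξ) Hc) := by
  have hball0 : (0 : ℂ) ∈ Metric.ball (0 : ℂ) 1 := by simp
  have han : AnalyticOnNhd ℂ (fun ξ => φ ξ - p) (Metric.ball 0 1) :=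
    (hφ.sub_const p).analyticOnNhd Metric.isOpen_ball
  have hne : ∀ᶠ ξ in 𝓝[≠] (0 : ℂ), φ ξ - p ≠ 0 := by
    rcases (han 0 hball0).eventually_eq_zero_or_eventually_ne_zero with h | h
    · exfalso
      have h1 := han.eqOn_zero_of_preconnected_of_eventuallyEq_zero
        (convex_ball (0 : ℂ) 1).isPreconnected hball0 h
      obtain ⟨a, ha, b, hb, hab⟩ := hnc
      exact hab ((sub_eq_zero.1 (h1 ha)).trans (sub_eq_zero.1 (h1 hb)).symm)
    · exact h
  rw [eventually_nhdsWithin_iff] at hne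
  have hcont : ContinuousAt φ 0 :=
    (hφ.differentiableAt (Metric.isOpen_ball.mem_nhds hball0)).continuousAt
  have hnear : ∀ᶠ ξ in 𝓝 (0 : ℂ), φ ξ ∈ Metric.ball p (R / 2) := by
    refine hcont.eventually (Metric.isOpen_ball.mem_nhds ?_)
    rw [hφ0]
    exact Metric.mem_ball_self (by linarith)
  obtain ⟨s, hs, hsb⟩ := Metric.eventually_nhds_iff_ball.1 (hne.and hnear)
  set r : ℝ := min (s / 2) (1 / 2) with hr
  have hr0 : 0 < r := by rw [hr]; positivity
  have hr1 : r < 1 := lt_of_le_of_lt (min_le_right _ _) (by norm_num)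
  have hrs : r < s := lt_of_le_of_lt (min_le_left _ _) (by linarith)
  have hin1 : Metric.closedBall (0 : ℂ) r ⊆ Metric.ball 0 1 := Metric.closedBall_subset_ball hr1
  have hins : Metric.closedBall (0 : ℂ) r ⊆ Metric.ball 0 s := Metric.closedBall_subset_ball hrs
  have hnp : ∀ ξ ∈ Metric.closedBall (0 : ℂ) r, ξ ≠ 0 → φ ξ ≠ p := fun ξ hξ h0 =>
    sub_ne_zero.1 ((hsb ξ (hins hξ)).1 h0)
  set K : Set ℂ := Metric.closedBall (0 : ℂ) r ∩ {ξ | r / 2 ≤ ‖ξ‖} with hK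
  have hKc : IsCompact K := (isCompact_closedBall (0 : ℂ) r).inter_right
    (isClosed_le continuous_const continuous_norm)
  have hdc : ContinuousOn (fun ξ => Metric.infDist (φ ξ) Hc) K :=
    (Metric.continuous_infDist_pt Hc).comp_continuousOn (hφ.continuousOn.mono fun ξ hξ => hin1 hξ.1)
  have hpos : ∀ ξ ∈ K, 0 < Metric.infDist (φ ξ) Hc := by
    rintro ξ ⟨hξ, hξ2⟩
    have h0 : ξ ≠ 0 := by
      rintro rfl
      have : r / 2 ≤ ‖(0 : ℂ)‖ := hξ2
      rw [norm_zero] at this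
      linarith
    refine (hcl.notMem_iff_infDist_pos ⟨p, hp⟩).1 fun h => ?_
    rw [hHc] at h
    exact hnp ξ hξ h0 (hφH ξ (hin1 hξ) h.1)
  have hex : ∃ η : ℝ, 0 < η ∧ ∀ ξ ∈ K, 2 * η ≤ Metric.infDist (φ ξ) Hc := by
    rcases K.eq_empty_or_nonempty with h | h
    · exact ⟨1, one_pos, by simp [h]⟩
    · obtain ⟨ξ₀, h0, hmin⟩ := hKc.exists_isMinOn h hdc
      refine ⟨Metric.infDist (φ ξ₀) Hc / 2, by linarith [hpos ξ₀ h0], fun ξ hξ => ?_⟩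
      have : Metric.infDist (φ ξ₀) Hc ≤ Metric.infDist (φ ξ) Hc := hmin hξ
      linarith
  obtain ⟨η, hη, hη2⟩ := hex
  refine ⟨r, η, hr0, hr1, hη, fun ξ hξ => ?_, fun ξ hξ h0 => hφV ξ (hin1 hξ) (hnp ξ hξ h0),
    fun ξ hξ h => hη2 ξ ⟨hξ, h⟩⟩
  have := (hsb ξ (hins hξ)).2
  rwa [Metric.mem_ball, dist_eq_norm] at this

theorem main_ext [FiniteDimensional ℂ E] {U H V₁ V₂ : Set E} {p : E}
    (hU : IsOpen U) (hO : IsOpen (U \ H)) (hHU : H ⊆ U) (hp : p ∈ H)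
    (hV₁ : IsOpen V₁) (hV₁c : IsOpen ((U \ H) \ V₁))
    (hV₂ : IsOpen V₂) (hV₂c : IsOpen ((U \ H) \ V₂)) (hdis : Disjoint V₁ V₂) {φ₁ φ₂ : ℂ → E}
    (hφ₁ : DifferentiableOn ℂ φ₁ (Metric.ball 0 1)) (hφ₁0 : φ₁ 0 = p)
    (hnc₁ : ∃ a ∈ Metric.ball (0 : ℂ) 1, ∃ b ∈ Metric.ball (0 : ℂ) 1, φ₁ a ≠ φ₁ b)
    (hφ₁H : ∀ ξ ∈ Metric.ball (0 : ℂ) 1, φ₁ ξ ∈ H → φ₁ ξ = p)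
    (hφ₁V : ∀ ξ ∈ Metric.ball (0 : ℂ) 1, φ₁ ξ ≠ p → φ₁ ξ ∈ V₁)
    (hφ₂ : DifferentiableOn ℂ φ₂ (Metric.ball 0 1)) (hφ₂0 : φ₂ 0 = p)
    (hnc₂ : ∃ a ∈ Metric.ball (0 : ℂ) 1, ∃ b ∈ Metric.ball (0 : ℂ) 1, φ₂ a ≠ φ₂ b)
    (hφ₂H : ∀ ξ ∈ Metric.ball (0 : ℂ) 1, φ₂ ξ ∈ H → φ₂ ξ = p)
    (hφ₂V : ∀ ξ ∈ Metric.ball (0 : ℂ) 1, φ₂ ξ ≠ p → φ₂ ξ ∈ V₂) :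
    ∃ ε > 0, Metric.ball p ε ⊆ U ∧ ∀ W : Set E, IsOpen W → H ⊆ W → ∀ f : E → ℂ,
      DifferentiableOn ℂ f W → ∃ F : E → ℂ, DifferentiableOn ℂ F (Metric.ball p ε) ∧
        ∀ S : Set E, IsPreconnected S → p ∈ S → S ⊆ Metric.ball p ε ∩ W → ∀ z ∈ S, F z = f z := by
  have : CompleteSpace E := FiniteDimensional.complete ℂ E
  have : ProperSpace E := FiniteDimensional.proper ℂ E
  have : FiniteDimensional ℝ E := FiniteDimensional.complexToReal E
  obtain ⟨R, hR, hRU⟩ := Metric.nhds_basis_closedBall.mem_iff.1 (hU.mem_nhds (hHU hp))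
  set Hc : Set E := H ∩ Metric.closedBall p R with hHc
  have hcl : IsClosed Hc := by
    have : Hc = Metric.closedBall p R ∩ (U \ H)ᶜ := by
      ext x
      simp only [hHc, Set.mem_inter_iff, Set.mem_compl_iff, Set.mem_sdiff]
      constructor
      · rintro ⟨h1, h2⟩
        exact ⟨h2, fun h => h.2 h1⟩
      · rintro ⟨h1, h2⟩
        refine ⟨?_, h1⟩
        by_contra h3
        exact h2 ⟨hRU h1, h3⟩
    rw [this]
    exact Metric.isClosed_closedBall.inter hO.isClosed_compl
  have hHcc : IsCompact Hc := (isCompact_closedBall p R).of_isClosed_subset hcl Set.inter_subset_right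
  have hpc : p ∈ Hc := ⟨hp, Metric.mem_closedBall_self hR.le⟩
  have hHcn : Hc.Nonempty := ⟨p, hpc⟩
  obtain ⟨r₁, η₁, hr₁, hr₁1, hη₁, hb₁, hv₁, ha₁⟩ :=
    curve_setup hR hHc hcl hpc hφ₁ hφ₁0 hnc₁ hφ₁H hφ₁V
  obtain ⟨r₂, η₂, hr₂, hr₂1, hη₂, hb₂, hv₂, ha₂⟩ :=
    curve_setup hR hHc hcl hpc hφ₂ hφ₂0 hnc₂ hφ₂H hφ₂V
  set d : E → ℝ := fun u => Metric.infDist u Hc with hd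
  have hdc : Continuous d := Metric.continuous_infDist_pt Hc
  have hlip : ∀ u v, d u ≤ d v + ‖u - v‖ := fun u v => by
    rw [← dist_eq_norm]; exact Metric.infDist_le_infDist_add_dist
  have hdp : d p = 0 := Metric.infDist_zero_of_mem hpc
  set η : ℝ := min η₁ η₂ with hη
  have hη0 : 0 < η := lt_min hη₁ hη₂
  have hηl : η ≤ η₁ := min_le_left _ _
  have hηr : η ≤ η₂ := min_le_right _ _
  set ε : ℝ := min η (R / 4) with hε
  have hε0 : 0 < ε := lt_min hη0 (by linarith)
  have hεη : ε ≤ η := min_le_left _ _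
  have hεR : ε ≤ R / 4 := min_le_right _ _
  have hεU : Metric.ball p ε ⊆ U := fun x hx => hRU
    (Metric.ball_subset_closedBall (Metric.ball_subset_ball (by linarith) hx))
  refine ⟨ε, hε0, hεU, ?_⟩
  intro W hW hHW f hf
  have hOmem : ∀ u ∈ Metric.closedBall p R, 0 < d u → u ∈ U \ H := by
    intro u hu hdu
    refine ⟨hRU hu, fun h => ?_⟩
    have : d u = 0 := Metric.infDist_zero_of_mem ⟨h, hu⟩
    linarith
  have hseg : ∀ V, IsOpen V → IsOpen ((U \ H) \ V) → ∀ a ∈ Metric.ball p R, ∀ b ∈ Metric.ball p R,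
      ‖a - b‖ < d a → a ∈ V → b ∈ V := by
    intro V hV hVc a ha b hb hab haV
    have hsub : segment ℝ a b ⊆ V := by
      refine IsPreconnected.subset_left_of_subset_union hV hVc Set.disjoint_sdiff_right ?_
        ⟨a, left_mem_segment ℝ a b, haV⟩ (convex_segment a b).isPreconnected
      intro x hx
      have hxb : x ∈ Metric.ball p R := (convex_ball p R).segment_subset ha hb hx
      have hxd : ‖a - x‖ ≤ ‖a - b‖ := by
        have := norm_sub_le_of_mem_segment hx
        rw [norm_sub_rev, norm_sub_rev a b]
        exact this
      have := hOmem x (Metric.ball_subset_closedBall hxb) (by linarith [hlip a x])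
      by_cases h : x ∈ V
      · exact Or.inl h
      · exact Or.inr ⟨this, h⟩
    exact hsub (right_mem_segment ℝ a b)
  obtain ⟨δ, hδ, hδW⟩ := hHcc.exists_thickening_subset_open hW (Set.inter_subset_left.trans hHW)
  set t : ℝ := min (δ / 3) (min (η / 3) (R / 8)) with ht
  have ht0 : 0 < t := lt_min (by linarith) (lt_min (by linarith) (by linarith))
  have htδ : 3 * t ≤ δ := by
    have : t ≤ δ / 3 := min_le_left _ _
    linarith
  have htη : 3 * t ≤ η := by
    have : t ≤ η / 3 := (min_le_right _ _).trans (min_le_left _ _)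
    linarith
  have htR : t ≤ R / 8 := (min_le_right _ _).trans (min_le_right _ _)
  have hdW : ∀ u, d u < 3 * t → u ∈ W := fun u hu =>
    hδW ((Metric.mem_thickening_iff_infDist_lt hHcn).2 (lt_of_lt_of_le hu htδ))
  -- cutoff
  set K₁ : Set E := Metric.closedBall p R ∩ {u | t ≤ d u} ∩ ((U \ H) \ V₁)ᶜ with hK₁
  set K₀ : Set E := Metric.closedBall p R ∩ {u | t ≤ d u} ∩ V₁ᶜ with hK₀
  have hcl0 : IsClosed (Metric.closedBall p R ∩ {u | t ≤ d u}) :=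
    Metric.isClosed_closedBall.inter (isClosed_le continuous_const hdc)
  have hKd : Disjoint K₀ K₁ := by
    rw [Set.disjoint_left]
    rintro u ⟨⟨hu, hut⟩, huV⟩ ⟨-, h2⟩
    exact h2 ⟨hOmem u hu (lt_of_lt_of_le ht0 hut), huV⟩
  obtain ⟨χr, hχ0, hχ1, -⟩ := exists_contMDiffMap_zero_one_of_isClosed (n := 1)
    (modelWithCornersSelf ℝ E)
    (hcl0.inter hV₁.isClosed_compl) (hcl0.inter hV₁c.isClosed_compl) hKd
  have hχrs : ContDiff ℝ 1 χr := χr.contMDiff.contDiff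
  set χ : E → ℂ := fun u => (χr u : ℂ) with hχ
  have hχs : ContDiff ℝ 1 χ := Complex.ofRealCLM.contDiff.comp hχrs
  have hloc1 : ∀ u ∈ Metric.ball p R, t < d u → u ∈ V₁ → χ =ᶠ[𝓝 u] fun _ => 1 := by
    intro u hu hut huV
    filter_upwards [Metric.isOpen_ball.mem_nhds hu, (isOpen_lt continuous_const hdc).mem_nhds hut,
      hV₁.mem_nhds huV] with v h1 h2 h3
    have : χr v = 1 := hχ1 ⟨⟨Metric.ball_subset_closedBall h1, le_of_lt h2⟩, fun h => h.2 h3⟩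
    simp [hχ, this]
  have hloc0 : ∀ u ∈ Metric.ball p R, t < d u → u ∉ V₁ → χ =ᶠ[𝓝 u] fun _ => 0 := by
    intro u hu hut huV
    have huO := hOmem u (Metric.ball_subset_closedBall hu) (ht0.trans hut)
    filter_upwards [Metric.isOpen_ball.mem_nhds hu, (isOpen_lt continuous_const hdc).mem_nhds hut,
      hV₁c.mem_nhds ⟨huO, huV⟩] with v h1 h2 h3
    have : χr v = 0 := hχ0 ⟨⟨Metric.ball_subset_closedBall h1, le_of_lt h2⟩, h3.2⟩
    simp [hχ, this]
  -- the function
  set g : E → ℂ := W.indicator f with hg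
  have hgf : ∀ u ∈ W, g =ᶠ[𝓝 u] f := by
    intro u hu
    filter_upwards [hW.mem_nhds hu] with v hv
    exact Set.indicator_of_mem hv f
  have hgd : ∀ u ∈ W, DifferentiableAt ℂ g u := fun u hu =>
    (hf.differentiableAt (hW.mem_nhds hu)).congr_of_eventuallyEq (hgf u hu)
  obtain ⟨M, hM⟩ : ∃ M, ∀ u ∈ {u | d u ≤ 2 * t}, ‖g u‖ ≤ M := by
    refine IsCompact.exists_bound_of_continuousOn ?_ fun u hu =>
      (hgd u (hdW u (by have : d u ≤ 2 * t := hu; linarith))).continuousAt.continuousWithinAt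
    refine Metric.isCompact_of_isClosed_isBounded (isClosed_le hdc continuous_const) ?_
    refine (hHcc.isBounded.thickening (δ := 3 * t)).subset fun u hu => ?_
    have : d u ≤ 2 * t := hu
    exact (Metric.mem_thickening_iff_infDist_lt hHcn).2 (by show d u < _; linarith)
  let : MeasurableSpace E := borel E
  have : BorelSpace E := ⟨rfl⟩
  have hgm : Measurable g := by
    classical
    rw [hg, ← Set.piecewise_eq_indicator]
    exact ContinuousOn.measurable_piecewise hf.continuousOn continuousOn_const hW.measurableSet
  have hC : Cut p R t d g χ M := by
    refine ⟨ht0, htR, hlip, hdc, fun u hu => hgd u (hdW u hu), hM, hχs, ?_, ?_⟩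
    · intro u hu hut
      have hu' : u ∈ Metric.ball p R := Metric.ball_subset_ball (by linarith) hu
      by_cases h : u ∈ V₁
      · exact ⟨1, hloc1 u hu' hut h⟩
      · exact ⟨0, hloc0 u hu' hut h⟩
    · intro u hu hut h hh
      have hu' : u ∈ Metric.ball p R := Metric.ball_subset_ball (by linarith) hu
      have huh : u - h ∈ Metric.ball p R := by
        rw [Metric.mem_ball, dist_eq_norm] at hu ⊢
        calc ‖u - h - p‖ = ‖(u - p) - h‖ := by congr 1; abel
          _ ≤ _ := norm_sub_le _ _
          _ < _ := by linarith
      have hduh : t < d (u - h) := by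
        have := hlip u (u - h)
        rw [sub_sub_cancel] at this
        linarith
      by_cases h1 : u ∈ V₁
      · have h2 : u - h ∈ V₁ := hseg V₁ hV₁ hV₁c u hu' _ huh (by rw [sub_sub_cancel]; linarith) h1
        rw [(hloc1 u hu' (by linarith) h1).self_of_nhds, (hloc1 _ huh hduh h2).self_of_nhds]
      · have h2 : u - h ∉ V₁ := fun h3 => h1 (hseg V₁ hV₁ hV₁c _ huh u hu' (by
          rw [sub_sub_cancel_left, norm_neg]; linarith) h3)
        rw [(hloc0 u hu' (by linarith) h1).self_of_nhds, (hloc0 _ huh hduh h2).self_of_nhds]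
  have hside : ∀ (φ : ℂ → E) (r η' : ℝ), DifferentiableOn ℂ φ (Metric.ball 0 1) → φ 0 = p →
      0 < r → r < 1 → η ≤ η' → (∀ ξ ∈ Metric.closedBall (0 : ℂ) r, ‖φ ξ - p‖ < R / 2) →
      (∀ ξ ∈ Metric.closedBall (0 : ℂ) r, r / 2 ≤ ‖ξ‖ → 2 * η' ≤ Metric.infDist (φ ξ) Hc) →
      Side p R t ε d (fun ξ => φ ξ - p) r := by
    intro φ r η' h1 h2 h3 h4 h5 h6 h7
    refine ⟨h1.sub_const p, by simp [h2], h3, h4, ?_, ?_⟩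
    · intro ξ hξ z hz
      rw [Metric.mem_ball, dist_eq_norm] at hz ⊢
      calc ‖z + (φ ξ - p) - p‖ = ‖(z - p) + (φ ξ - p)‖ := by congr 1; abel
        _ ≤ _ := norm_add_le _ _
        _ < _ := by linarith [h6 ξ hξ]
    · intro ξ hξ hξ2 z hz
      have e1 : 2 * η' ≤ d (φ ξ) := h7 ξ (Metric.ball_subset_closedBall hξ) hξ2.le
      have e2 := hlip (φ ξ) (z + (φ ξ - p))
      have e3 : φ ξ - (z + (φ ξ - p)) = p - z := by abel
      rw [e3, norm_sub_rev] at e2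
      rw [Metric.mem_ball, dist_eq_norm] at hz
      linarith
  have hS₁ := hside φ₁ r₁ η₁ hφ₁ hφ₁0 hr₁ hr₁1 hηl hb₁ ha₁
  have hS₂ := hside φ₂ r₂ η₂ hφ₂ hφ₂0 hr₂ hr₂1 hηr hb₂ ha₂
  set F : E → ℂ := FF g χ (fun ξ => φ₁ ξ - p) (fun ξ => φ₂ ξ - p) r₁ r₂ with hF
  have hFd : DifferentiableOn ℂ F (Metric.ball p ε) := fun z hz =>
    (FF_diff hgm hC hS₁ hS₂ hz).differentiableWithinAt
  have hmemV : ∀ (φ : ℂ → E) (r : ℝ) (V : Set E), IsOpen V → IsOpen ((U \ H) \ V) → φ 0 = p →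
      Side p R t ε d (fun ξ => φ ξ - p) r →
      (∀ ξ ∈ Metric.closedBall (0 : ℂ) r, ‖φ ξ - p‖ < R / 2) →
      (∀ ξ ∈ Metric.closedBall (0 : ℂ) r, ξ ≠ 0 → φ ξ ∈ V) →
      ∀ z ∈ Metric.ball p ε, z ∈ Metric.ball p t → ∀ ξ ∈ Metric.closedBall (0 : ℂ) r,
      2 * t < d (z + (φ ξ - p)) → z + (φ ξ - p) ∈ Metric.ball p R ∧ z + (φ ξ - p) ∈ V := by
    intro φ r V hV hVc h0 hS hb hv z hz hzt ξ hξ hd2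
    have hzt' : ‖z - p‖ < t := by rwa [Metric.mem_ball, dist_eq_norm] at hzt
    have h1 : z + (φ ξ - p) ∈ Metric.ball p R :=
      Metric.ball_subset_ball (by linarith) (hS.mem ξ hξ z hz)
    refine ⟨h1, ?_⟩
    have hξ0 : ξ ≠ 0 := by
      rintro rfl
      rw [h0, sub_self, add_zero] at hd2
      have := hlip z p
      linarith
    have h2 : φ ξ ∈ Metric.ball p R := by
      rw [Metric.mem_ball, dist_eq_norm]
      linarith [hb ξ hξ]
    have e3 : φ ξ - (z + (φ ξ - p)) = p - z := by abel
    have e4 := hlip (z + (φ ξ - p)) (φ ξ)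
    rw [norm_sub_rev, e3, norm_sub_rev] at e4
    refine hseg V hV hVc (φ ξ) h2 _ h1 ?_ (hv ξ hξ hξ0)
    rw [e3, norm_sub_rev]
    linarith
  have hnear : ∀ z ∈ Metric.ball p ε, z ∈ Metric.ball p t → F z = g z := by
    intro z hz hzt
    refine FF_eq hC hS₁ hS₂ hz ?_ ?_
    · intro ξ hξ hd2
      obtain ⟨h1, h2⟩ := hmemV φ₁ r₁ V₁ hV₁ hV₁c hφ₁0 hS₁ hb₁ hv₁ z hz hzt ξ hξ hd2
      exact hloc1 _ h1 (by linarith) h2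
    · intro ξ hξ hd2
      obtain ⟨h1, h2⟩ := hmemV φ₂ r₂ V₂ hV₂ hV₂c hφ₂0 hS₂ hb₂ hv₂ z hz hzt ξ hξ hd2
      exact hloc0 _ h1 (by linarith) fun h3 => Set.disjoint_left.1 hdis h3 h2
  refine ⟨F, hFd, ?_⟩
  intro S hSp hpS hSs z hz
  have hD : IsOpen (Metric.ball p ε ∩ W) := Metric.isOpen_ball.inter hW
  have hpW : p ∈ W := hHW hp
  have := ident (G := fun z => F z - f z) hD
    ((hFd.mono Set.inter_subset_left).sub (hf.mono Set.inter_subset_right)) hSp hSs hpS ?_ z hz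
  · exact sub_eq_zero.1 this
  · filter_upwards [Metric.ball_mem_nhds p hε0, Metric.ball_mem_nhds p ht0, hgf p hpW] with w h1 h2 h3
    rw [hnear w h1 h2, h3, sub_self]

end geo

end HX

end

end

theorem HX.comp_clopen {X : Type*} [TopologicalSpace X] [LocallyConnectedSpace X] {O : Set X}
    (hO : IsOpen O) (x : X) : IsOpen (connectedComponentIn O x) ∧
      IsOpen (O \ connectedComponentIn O x) := by
  refine ⟨hO.connectedComponentIn, ?_⟩
  rw [isOpen_iff_mem_nhds]
  rintro y ⟨hy, hyx⟩
  filter_upwards [hO.connectedComponentIn.mem_nhds (mem_connectedComponentIn hy)] with w hw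
  refine ⟨connectedComponentIn_subset _ _ hw, fun hwx => hyx ?_⟩
  rw [connectedComponentIn_eq hwx, ← connectedComponentIn_eq hw]
  exact mem_connectedComponentIn hy

theorem holomorphic_extension_to_fixed_neighborhood {n : ℕ} (hn : 2 ≤ n)
    (U H : Set (EuclideanSpace ℂ (Fin n)))
    (hH : IsRealAnalyticHypersurface U H)
    (p : EuclideanSpace ℂ (Fin n)) (hp : p ∈ H)
    (h2 : CurveSupportedFromTwoSides U H p) :
    ∃ Ω : Set (EuclideanSpace ℂ (Fin n)), IsOpen Ω ∧ p ∈ Ω ∧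
      ∀ W : Set (EuclideanSpace ℂ (Fin n)), IsOpen W → H ⊆ W →
        ∀ f : EuclideanSpace ℂ (Fin n) → ℂ, DifferentiableOn ℂ f W →
          ∃ F : EuclideanSpace ℂ (Fin n) → ℂ, DifferentiableOn ℂ F Ω ∧
            ∀ z ∈ Ω ∩ H, F z = f z := by
  obtain ⟨hU, -, ρ, hρ, hHρ, -⟩ := hH
  obtain ⟨C₁, C₂, V₁, V₂, ⟨φ₁, hφ₁, hm₁, hnc₁, h0₁, hC₁, hCH₁⟩, ⟨φ₂, hφ₂, hm₂, hnc₂, h0₂, hC₂, hCH₂⟩,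
    ⟨x₁, hx₁, hV₁⟩, ⟨x₂, hx₂, hV₂⟩, hne, hCV₁, hCV₂⟩ := h2
  have hHU : H ⊆ U := by
    intro z hz
    rw [hHρ] at hz
    exact hz.1
  have hO : IsOpen (U \ H) := by
    have : U \ H = U ∩ ρ ⁻¹' {0}ᶜ := by
      ext z
      rw [hHρ]
      simp only [Set.mem_sdiff, Set.mem_setOf_eq, Set.mem_inter_iff, Set.mem_preimage,
        Set.mem_compl_iff, Set.mem_singleton_iff]
      tauto
    rw [this]
    exact hρ.continuousOn.isOpen_inter_preimage hU isOpen_compl_singleton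
  have hc₁ := HX.comp_clopen hO x₁
  have hc₂ := HX.comp_clopen hO x₂
  rw [← hV₁] at hc₁
  rw [← hV₂] at hc₂
  have hdis : Disjoint V₁ V₂ := by
    rw [Set.disjoint_left]
    intro w hw1 hw2
    apply hne
    rw [hV₁] at hw1
    rw [hV₂] at hw2
    rw [hV₁, hV₂, connectedComponentIn_eq hw1, connectedComponentIn_eq hw2]
  obtain ⟨ε, hε, hεU, hext⟩ := HX.main_ext hU hO hHU hp hc₁.1 hc₁.2 hc₂.1 hc₂.2 hdis
    hφ₁ h0₁ hnc₁
    (fun ξ hξ h => by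
      have : φ₁ ξ ∈ C₁ ∩ H := ⟨by rw [hC₁]; exact ⟨ξ, hξ, rfl⟩, h⟩
      rw [hCH₁] at this
      exact this)
    (fun ξ hξ h => hCV₁ ⟨by rw [hC₁]; exact ⟨ξ, hξ, rfl⟩, h⟩)
    hφ₂ h0₂ hnc₂
    (fun ξ hξ h => by
      have : φ₂ ξ ∈ C₂ ∩ H := ⟨by rw [hC₂]; exact ⟨ξ, hξ, rfl⟩, h⟩
      rw [hCH₂] at this
      exact this)
    (fun ξ hξ h => hCV₂ ⟨by rw [hC₂]; exact ⟨ξ, hξ, rfl⟩, h⟩)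
  have hpρ : ρ p = 0 := by
    rw [hHρ] at hp
    exact hp.2
  obtain ⟨N, hN, hconn⟩ := HX.loc_conn (hρ p (hHU hp)) hpρ (ball_mem_nhds p hε)
  refine ⟨interior N ∩ ball p ε, isOpen_interior.inter isOpen_ball,
    ⟨mem_interior_iff_mem_nhds.2 hN, mem_ball_self hε⟩, ?_⟩
  intro W hW hHW f hf
  obtain ⟨F, hF, hFS⟩ := hext W hW hHW f hf
  refine ⟨F, hF.mono Set.inter_subset_right, ?_⟩
  rintro z ⟨hz, hzH⟩
  have hzρ : ρ z = 0 := by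
    rw [hHρ] at hzH
    exact hzH.2
  obtain ⟨S, hS, hSp, hpS, hzS⟩ := hconn z (interior_subset hz.1) hzρ
  refine hFS S hSp hpS (fun w hw => ⟨(hS w hw).1, hHW ?_⟩) z hzS
  rw [hHρ]
  exact ⟨hεU (hS w hw).1, (hS w hw).2⟩
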